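/- arXiv:2212.11893 — 2 statements merged into one kernel-verified Lean document; each statement's English description precedes it below -/
import Mathlib

section
/- Let X, Y, V be Banach spaces, Ω ⊆ X and Ω̂ ⊆ Y open sets, φ : Ω → Ω̂ and f : Ω̂ → V mappings, and x ∈ Ω a point such that φ is m-times Fréchet differentiable at x and f is m-times Fréchet differentiable at φ(x). Then f ∘ φ is m-times Fréchet differentiable at x and for all v₁, …, v_m ∈ X one has ∇^m(f∘φ)|_x(v₁,…,v_m) = Σ_{k=1}^{m} Σ_{P ∈ 𝒫(m,k)} ∇^k f|_{φ(x)}( ∇^{|P₁|}φ|_x(∨_{i∈P₁} v_i), …, ∇^{|P_k|}φ|_x(∨_{i∈P_k} v_i) ), where the sum runs over all partitions P = {P₁,…,P_k} of {1,…,m} into k nonempty pairwise disjoint sets. -/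
/-!
Faà di Bruno's formula in Mathlib sums over `OrderedFinpartition m`, whose parts are listed by
increasing greatest element. Listing the parts of an arbitrary partition in that order identifies
ordered partitions with partitions. The listing enters the formula only through the order of the
arguments of `∇^k f`, which is immaterial because iterated derivatives are symmetric: transposing
the first two arguments is the symmetry of a second derivative, transposing two later neighbours
is an identity between derivatives of lower order, and adjacent transpositions generate all
permutations.
-/

open scoped Classical

noncomputable section

/-- `P` is a partition of `{1, …, m}` (here `Fin m`) into `k` pairwise disjoint
nonempty subsets. -/
def IsPartitionInto (m k : ℕ) (P : Finset (Finset (Fin m))) : Prop :=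
  P.card = k ∧ (∅ : Finset (Fin m)) ∉ P ∧
    (∀ S ∈ P, ∀ T ∈ P, S ≠ T → Disjoint S T) ∧ ∀ i : Fin m, ∃ S ∈ P, i ∈ S

section Symmetry

open Filter Topology

variable {𝕜 E F : Type*} [NontriviallyNormedField 𝕜]
  [NormedAddCommGroup E] [NormedSpace 𝕜 E] [NormedAddCommGroup F] [NormedSpace 𝕜 F]
  {f : E → F} {x : E} {n : ℕ}

lemma iteratedFDeriv_add_two_apply_left (v : Fin (n + 2) → E) :
    iteratedFDeriv 𝕜 (n + 2) f x v =
      fderiv 𝕜 (fderiv 𝕜 (iteratedFDeriv 𝕜 n f)) x (v 0) (v 1) (Fin.tail (Fin.tail v)) := by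
  let uncurry : (E →L[𝕜] E [×n]→L[𝕜] F) ≃L[𝕜] E [×(n + 1)]→L[𝕜] F :=
    (continuousMultilinearCurryLeftEquiv 𝕜 (fun _ : Fin (n + 1) ↦ E) F).symm
  have fderiv_uncurry_comp :=
    uncurry.comp_fderiv (𝕜 := 𝕜) (f := fderiv 𝕜 (iteratedFDeriv 𝕜 n f)) (x := x)
  exact congrArg (fun D : E →L[𝕜] E [×(n + 1)]→L[𝕜] F ↦ D (v 0) (Fin.tail v)) fderiv_uncurry_comp

lemma iteratedFDeriv_comp_swap_zero_one
    (h : IsSymmSndFDerivAt 𝕜 (iteratedFDeriv 𝕜 n f) x) (v : Fin (n + 2) → E) :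
    iteratedFDeriv 𝕜 (n + 2) f x (v ∘ Equiv.swap 0 1) = iteratedFDeriv 𝕜 (n + 2) f x v := by
  have tail_tail : Fin.tail (Fin.tail (v ∘ Equiv.swap 0 1)) = Fin.tail (Fin.tail v) := by
    funext j
    exact congrArg v (Equiv.swap_apply_of_ne_of_ne (by simp) (by simp [Fin.ext_iff]))
  rw [iteratedFDeriv_add_two_apply_left, iteratedFDeriv_add_two_apply_left, tail_tail,
    Function.comp_apply, Function.comp_apply, Equiv.swap_apply_left, Equiv.swap_apply_right, h.eq]

lemma iteratedFDeriv_succ_congr_of_eventually_tail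
    (hf : DifferentiableAt 𝕜 (iteratedFDeriv 𝕜 n f) x) {v w : Fin (n + 1) → E} (h₀ : v 0 = w 0)
    (htail : ∀ᶠ y in 𝓝 x,
      iteratedFDeriv 𝕜 n f y (Fin.tail v) = iteratedFDeriv 𝕜 n f y (Fin.tail w)) :
    iteratedFDeriv 𝕜 (n + 1) f x v = iteratedFDeriv 𝕜 (n + 1) f x w := by
  rw [hf.iteratedFDeriv_succ_apply_left', hf.iteratedFDeriv_succ_apply_left', h₀,
    EventuallyEq.fderiv_eq htail]

lemma iteratedFDeriv_comp_swap_castSucc_succ [IsRCLikeNormedField 𝕜] (i : Fin n)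
    (hf : ContDiffAt 𝕜 (n + 1 : ℕ) f x) (v : Fin (n + 1) → E) :
    iteratedFDeriv 𝕜 (n + 1) f x (v ∘ Equiv.swap i.castSucc i.succ) =
      iteratedFDeriv 𝕜 (n + 1) f x v := by
  induction n generalizing x with
  | zero => exact i.elim0
  | succ n ih =>
    cases i using Fin.cases with
    | zero =>
      have hsnd : ContDiffAt 𝕜 2 (iteratedFDeriv 𝕜 n f) x :=
        hf.iteratedFDeriv_right (by norm_cast; lia)
      exact iteratedFDeriv_comp_swap_zero_one (hsnd.isSymmSndFDerivAt (by simp)) v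
    | succ j =>
      have hdiff : DifferentiableAt 𝕜 (iteratedFDeriv 𝕜 (n + 1) f) x :=
        (hf.iteratedFDeriv_right (m := 1) (by norm_cast; lia)).differentiableAt one_ne_zero
      have hnear : ∀ᶠ y in 𝓝 x, ContDiffAt 𝕜 (n + 1 : ℕ) f y :=
        (hf.of_le (by norm_cast; lia)).eventually (by simp)
      have tail_swap : Fin.tail (v ∘ Equiv.swap j.succ.castSucc j.succ.succ) =
          Fin.tail v ∘ Equiv.swap j.castSucc j.succ := by
        funext l
        exact congrArg v ((Fin.succ_injective _).swap_apply j.castSucc j.succ l)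
      refine iteratedFDeriv_succ_congr_of_eventually_tail hdiff ?_ ?_
      · exact congrArg v (Equiv.swap_apply_of_ne_of_ne (by simp [Fin.ext_iff])
          (Fin.succ_ne_zero _).symm)
      · filter_upwards [hnear] with y hy
        rw [tail_swap, ih j hy]

lemma iteratedFDeriv_comp_perm [IsRCLikeNormedField 𝕜] (hf : ContDiffAt 𝕜 n f x)
    (v : Fin n → E) (σ : Equiv.Perm (Fin n)) :
    iteratedFDeriv 𝕜 n f x (v ∘ σ) = iteratedFDeriv 𝕜 n f x v := by
  cases n with
  | zero => rw [Subsingleton.elim (v ∘ σ) v]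
  | succ n =>
    have hσ : σ ∈ Submonoid.closure
        (Set.range fun i : Fin n ↦ Equiv.swap i.castSucc i.succ) := by
      rw [Equiv.Perm.mclosure_swap_castSucc_succ]
      exact Submonoid.mem_top σ
    induction hσ using Submonoid.closure_induction generalizing v with
    | mem _ hs =>
      obtain ⟨i, rfl⟩ := hs
      exact iteratedFDeriv_comp_swap_castSucc_succ i hf v
    | one => rfl
    | mul σ τ _ _ hσ hτ => exact (hτ (v ∘ σ)).trans (hσ v)

lemma iteratedFDeriv_comp_perm_of_minSmoothness (hf : ContDiffAt 𝕜 (minSmoothness 𝕜 n) f x)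
    (v : Fin n → E) (σ : Equiv.Perm (Fin n)) :
    iteratedFDeriv 𝕜 n f x (v ∘ σ) = iteratedFDeriv 𝕜 n f x v := by
  by_cases h𝕜 : IsRCLikeNormedField 𝕜
  · exact iteratedFDeriv_comp_perm (by simpa using hf) v σ
  · exact ContDiffAt.iteratedFDeriv_comp_perm (by simpa [minSmoothness, h𝕜] using hf) v σ

lemma iteratedFDeriv_comp_equiv {k : ℕ} (hf : ContDiffAt 𝕜 (minSmoothness 𝕜 n) f x)
    (e : Fin n ≃ Fin k) (v : Fin k → E) :
    iteratedFDeriv 𝕜 n f x (v ∘ e) = iteratedFDeriv 𝕜 k f x v := by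
  obtain rfl : n = k := by simpa using Fintype.card_congr e
  exact iteratedFDeriv_comp_perm_of_minSmoothness hf v e

end Symmetry

section OrderedFinpartitionEquiv

open Finset

variable {n : ℕ}

/-- The set underlying the `i`-th part of an ordered partition. -/
def orderedPart (c : OrderedFinpartition n) (i : Fin c.length) : Finset (Fin n) :=
  univ.image (c.emb i)

/-- The greatest element of the `i`-th part of an ordered partition, in the form in which
`OrderedFinpartition.parts_strictMono` mentions it. -/
def orderedPartLast (c : OrderedFinpartition n) (i : Fin c.length) : Fin n :=
  c.emb i ⟨c.partSize i - 1, Nat.sub_one_lt_of_lt (c.partSize_pos i)⟩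

lemma emb_mem_orderedPart (c : OrderedFinpartition n) (i : Fin c.length)
    (j : Fin (c.partSize i)) : c.emb i j ∈ orderedPart c i :=
  mem_image_of_mem _ (mem_univ j)

lemma card_orderedPart (c : OrderedFinpartition n) (i : Fin c.length) :
    #(orderedPart c i) = c.partSize i := by
  rw [orderedPart, card_image_of_injective _ (c.emb_strictMono i).injective, card_fin]

lemma isGreatest_orderedPartLast (c : OrderedFinpartition n) (i : Fin c.length) :
    IsGreatest (orderedPart c i : Set (Fin n)) (orderedPartLast c i) := by
  refine ⟨emb_mem_orderedPart c i _, fun a ha ↦ ?_⟩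
  obtain ⟨j, -, rfl⟩ := mem_image.1 ha
  exact (c.emb_strictMono i).monotone (Nat.le_sub_one_of_lt j.is_lt)

lemma strictMono_orderedPartLast (c : OrderedFinpartition n) : StrictMono (orderedPartLast c) :=
  c.parts_strictMono

lemma orderedPart_eq_of_mem {c : OrderedFinpartition n} {i j : Fin c.length} {a : Fin n}
    (hi : a ∈ orderedPart c i) (hj : a ∈ orderedPart c j) : i = j := by
  obtain ⟨p, -, rfl⟩ := mem_image.1 hi
  obtain ⟨q, -, hq⟩ := mem_image.1 hj
  by_contra hij
  exact c.emb_ne_emb_of_ne hij hq.symm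

lemma orderedPart_injective (c : OrderedFinpartition n) : Function.Injective (orderedPart c) :=
  fun i _ h ↦ orderedPart_eq_of_mem (isGreatest_orderedPartLast c i).1
    (h ▸ (isGreatest_orderedPartLast c i).1)

lemma exists_mem_orderedPart (c : OrderedFinpartition n) (a : Fin n) :
    ∃ i, a ∈ orderedPart c i :=
  ⟨c.index a, by simpa only [c.emb_invEmbedding] using emb_mem_orderedPart c _ (c.invEmbedding a)⟩

lemma orderedFinpartition_ext_of_orderedPart_eq {c d : OrderedFinpartition n}
    (hlength : c.length = d.length)
    (hpart : ∀ i, orderedPart c i = orderedPart d (i.cast hlength)) : c = d := by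
  have hsize (i : Fin c.length) : c.partSize i = d.partSize (i.cast hlength) := by
    rw [← card_orderedPart, ← card_orderedPart, hpart]
  have hrange (i : Fin c.length) :
      Set.range (c.emb i) = Set.range (d.emb (i.cast hlength)) := by
    simpa [orderedPart] using congrArg ((↑) : Finset (Fin n) → Set (Fin n)) (hpart i)
  obtain ⟨l, size, _, emb, hemb, _, _, _⟩ := c
  obtain ⟨l', size', _, emb', hemb', _, _, _⟩ := d
  obtain rfl : l = l' := hlength
  obtain rfl : size = size' := funext hsize
  obtain rfl : emb = emb' := funext fun i ↦ ((hemb i).range_inj (hemb' i)).1 (hrange i)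
  rfl

/-- The partition underlying an ordered partition. -/
def finpartitionOfOrdered (c : OrderedFinpartition n) : Finpartition (univ : Finset (Fin n)) :=
  Finpartition.ofExistsUnique (univ.image (orderedPart c)) (fun _ _ ↦ subset_univ _)
    (by
      intro a _
      obtain ⟨i, hi⟩ := exists_mem_orderedPart c a
      refine ⟨orderedPart c i, ⟨mem_image_of_mem _ (mem_univ i), hi⟩, ?_⟩
      rintro _ ⟨hS, ha⟩
      obtain ⟨j, -, rfl⟩ := mem_image.1 hS
      rw [orderedPart_eq_of_mem ha hi])
    (by
      intro h
      obtain ⟨i, -, hi⟩ := mem_image.1 h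
      exact notMem_empty _ (hi ▸ (isGreatest_orderedPartLast c i).1))

lemma parts_finpartitionOfOrdered (c : OrderedFinpartition n) :
    (finpartitionOfOrdered c).parts = univ.image (orderedPart c) := rfl

lemma orderedPart_mem_parts (c : OrderedFinpartition n) (i : Fin c.length) :
    orderedPart c i ∈ (finpartitionOfOrdered c).parts :=
  mem_image_of_mem _ (mem_univ i)

/-- The enumeration of the parts of the underlying partition by increasing greatest element. -/
def orderedPartEquiv (c : OrderedFinpartition n) :
    Fin c.length ≃ (finpartitionOfOrdered c).parts :=
  Equiv.ofBijective (fun i ↦ ⟨orderedPart c i, orderedPart_mem_parts c i⟩)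
    ⟨fun _ _ h ↦ orderedPart_injective c (congrArg Subtype.val h), fun ⟨S, hS⟩ ↦ by
      obtain ⟨i, -, rfl⟩ := mem_image.1 hS
      exact ⟨i, rfl⟩⟩

/-- The elements of a linearly ordered finite set that are greatest in their part. -/
def partMaxima {α : Type*} [LinearOrder α] {s : Finset α} (P : Finpartition s) : Finset α :=
  {a ∈ s | IsGreatest (P.part a : Set α) a}

lemma mem_partMaxima {α : Type*} [LinearOrder α] {s : Finset α} {P : Finpartition s} {a : α} :
    a ∈ partMaxima P ↔ a ∈ s ∧ IsGreatest (P.part a : Set α) a :=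
  mem_filter

lemma exists_mem_partMaxima_part_eq {α : Type*} [LinearOrder α] {s : Finset α}
    (P : Finpartition s) {S : Finset α} (hS : S ∈ P.parts) : ∃ a ∈ partMaxima P, P.part a = S := by
  have hmax := S.isGreatest_max' (P.nonempty_of_mem_parts hS)
  have hpart := P.part_eq_of_mem hS hmax.1
  exact ⟨_, mem_partMaxima.2 ⟨P.subset hS hmax.1, hpart.symm ▸ hmax⟩, hpart⟩

lemma partMaxima_finpartitionOfOrdered (c : OrderedFinpartition n) :
    partMaxima (finpartitionOfOrdered c) = univ.image (orderedPartLast c) := by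
  have part_eq {a : Fin n} {i : Fin c.length} (ha : a ∈ orderedPart c i) :
      (finpartitionOfOrdered c).part a = orderedPart c i :=
    Finpartition.part_eq_of_mem _ (orderedPart_mem_parts c i) ha
  ext a
  simp only [mem_partMaxima, mem_image, mem_univ, true_and]
  constructor
  · intro ha
    obtain ⟨i, hi⟩ := exists_mem_orderedPart c a
    exact ⟨i, (isGreatest_orderedPartLast c i).unique (part_eq hi ▸ ha)⟩
  · rintro ⟨i, rfl⟩
    rw [part_eq (isGreatest_orderedPartLast c i).1]
    exact isGreatest_orderedPartLast c i

lemma card_partMaxima_finpartitionOfOrdered (c : OrderedFinpartition n) :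
    #(partMaxima (finpartitionOfOrdered c)) = c.length := by
  rw [partMaxima_finpartitionOfOrdered,
    card_image_of_injective _ (strictMono_orderedPartLast c).injective, card_fin]

/-- The `i`-th smallest of the greatest elements of the parts. -/
def partMaximaEmb {α : Type*} [LinearOrder α] {s : Finset α} (P : Finpartition s) :
    Fin #(partMaxima P) ↪o α :=
  (partMaxima P).orderEmbOfFin rfl

section PartMaximaEmb

variable {α : Type*} [LinearOrder α] {s : Finset α} (P : Finpartition s)

lemma partMaximaEmb_mem (i : Fin #(partMaxima P)) : partMaximaEmb P i ∈ s :=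
  (mem_partMaxima.1 (orderEmbOfFin_mem _ _ i)).1

lemma isGreatest_partMaximaEmb (i : Fin #(partMaxima P)) :
    IsGreatest (P.part (partMaximaEmb P i) : Set α) (partMaximaEmb P i) :=
  (mem_partMaxima.1 (orderEmbOfFin_mem _ _ i)).2

lemma part_partMaximaEmb_injective :
    Function.Injective fun i ↦ P.part (partMaximaEmb P i) := by
  intro i j (h : P.part (partMaximaEmb P i) = P.part (partMaximaEmb P j))
  exact (partMaximaEmb P).injective
    ((isGreatest_partMaximaEmb P i).unique (h ▸ isGreatest_partMaximaEmb P j))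

lemma image_part_partMaximaEmb :
    univ.image (fun i ↦ P.part (partMaximaEmb P i)) = P.parts := by
  ext S
  simp only [mem_image, mem_univ, true_and]
  constructor
  · rintro ⟨i, rfl⟩
    exact P.part_mem.2 (partMaximaEmb_mem P i)
  · intro hS
    obtain ⟨a, ha, rfl⟩ := exists_mem_partMaxima_part_eq P hS
    obtain ⟨i, rfl⟩ : a ∈ Set.range (partMaximaEmb P) := by
      rwa [partMaximaEmb, range_orderEmbOfFin]
    exact ⟨i, rfl⟩

end PartMaximaEmb

/-- The ordered partition listing the parts of a partition by increasing greatest element. -/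
def orderedOfFinpartition (P : Finpartition (univ : Finset (Fin n))) : OrderedFinpartition n where
  length := #(partMaxima P)
  partSize i := #(P.part (partMaximaEmb P i))
  partSize_pos i := card_pos.2 ⟨_, (isGreatest_partMaximaEmb P i).1⟩
  emb i := (P.part (partMaximaEmb P i)).orderEmbOfFin rfl
  emb_strictMono i := OrderEmbedding.strictMono _
  parts_strictMono := by
    convert! (partMaximaEmb P).strictMono using 2 with i
    have hi := isGreatest_partMaximaEmb P i
    rw [orderEmbOfFin_last rfl (card_pos.2 ⟨_, hi.1⟩)]
    exact (isGreatest_max' _ _).unique hi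
  disjoint i _ j _ hij := by
    simp only [Function.onFun, range_orderEmbOfFin, disjoint_coe]
    exact P.disjoint (P.part_mem.2 (mem_univ _)) (P.part_mem.2 (mem_univ _))
      ((part_partMaximaEmb_injective P).ne hij)
  cover a := by
    have ha : P.part a ∈ P.parts := P.part_mem.2 (mem_univ a)
    rw [← image_part_partMaximaEmb] at ha
    obtain ⟨i, -, hi⟩ := mem_image.1 ha
    exact ⟨i, by simp [hi]⟩

lemma orderedPart_orderedOfFinpartition (P : Finpartition (univ : Finset (Fin n)))
    (i : Fin #(partMaxima P)) :
    orderedPart (orderedOfFinpartition P) i = P.part (partMaximaEmb P i) :=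
  image_orderEmbOfFin_univ _ rfl

lemma finpartitionOfOrdered_orderedOfFinpartition (P : Finpartition (univ : Finset (Fin n))) :
    finpartitionOfOrdered (orderedOfFinpartition P) = P := by
  refine Finpartition.ext ?_
  rw [parts_finpartitionOfOrdered, ← image_part_partMaximaEmb P]
  exact image_congr fun i _ ↦ orderedPart_orderedOfFinpartition P i

lemma orderedOfFinpartition_finpartitionOfOrdered (c : OrderedFinpartition n) :
    orderedOfFinpartition (finpartitionOfOrdered c) = c := by
  have hcard := card_partMaxima_finpartitionOfOrdered c
  refine orderedFinpartition_ext_of_orderedPart_eq hcard fun i ↦ ?_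
  have hlast : orderedPartLast c = (partMaxima (finpartitionOfOrdered c)).orderEmbOfFin hcard :=
    orderEmbOfFin_unique hcard (fun j ↦ by simp [partMaxima_finpartitionOfOrdered])
      (strictMono_orderedPartLast c)
  have hmem : partMaximaEmb (finpartitionOfOrdered c) i ∈ orderedPart c (i.cast hcard) := by
    have hi : partMaximaEmb (finpartitionOfOrdered c) i = orderedPartLast c (i.cast hcard) := by
      rw [hlast]
      exact orderEmbOfFin_eq_orderEmbOfFin_iff.2 rfl
    exact hi ▸ (isGreatest_orderedPartLast c _).1
  exact (orderedPart_orderedOfFinpartition _ i).trans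
    (Finpartition.part_eq_of_mem _ (orderedPart_mem_parts c _) hmem)

/-- Ordered partitions of `Fin n` are partitions of `Fin n`, because the order of the parts is
determined by their greatest elements. -/
def orderedFinpartitionEquivFinpartition :
    OrderedFinpartition n ≃ Finpartition (univ : Finset (Fin n)) where
  toFun := finpartitionOfOrdered
  invFun := orderedOfFinpartition
  left_inv := orderedOfFinpartition_finpartitionOfOrdered
  right_inv := finpartitionOfOrdered_orderedOfFinpartition

end OrderedFinpartitionEquiv

section IsPartitionInto

open Finset

variable {m k : ℕ}

lemma isPartitionInto_iff_exists_finpartition {P : Finset (Finset (Fin m))} :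
    IsPartitionInto m k P ↔
      ∃ Q : Finpartition (univ : Finset (Fin m)), #Q.parts = k ∧ Q.parts = P := by
  constructor
  · rintro ⟨hcard, hempty, hdisj, hcover⟩
    refine ⟨Finpartition.ofExistsUnique P (fun _ _ ↦ subset_univ _) (fun a _ ↦ ?_) hempty,
      hcard, rfl⟩
    obtain ⟨S, hS, haS⟩ := hcover a
    refine ⟨S, ⟨hS, haS⟩, fun T ⟨hT, haT⟩ ↦ ?_⟩
    by_contra hTS
    exact disjoint_left.1 (hdisj T hT S hS hTS) haT haS
  · rintro ⟨Q, hcard, rfl⟩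
    exact ⟨hcard, Q.empty_notMem_parts, fun _ hS _ hT ↦ Q.disjoint hS hT,
      fun a ↦ Q.exists_mem (mem_univ a)⟩

lemma sum_isPartitionInto_eq_sum_finpartition {M : Type*} [AddCommMonoid M]
    (F : Finset (Finset (Fin m)) → M) :
    ∑ P ∈ univ.filter (IsPartitionInto m k), F P =
      ∑ Q : Finpartition (univ : Finset (Fin m)) with #Q.parts = k, F Q.parts := by
  have himage : univ.filter (IsPartitionInto m k) =
      (univ.filter fun Q : Finpartition (univ : Finset (Fin m)) ↦ #Q.parts = k).image
        Finpartition.parts := by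
    ext P
    simp [isPartitionInto_iff_exists_finpartition]
  rw [himage, sum_image fun _ _ _ _ ↦ Finpartition.ext]

lemma sum_Icc_sum_isPartitionInto (hm : 1 ≤ m) {M : Type*} [AddCommMonoid M]
    (F : Finset (Finset (Fin m)) → M) :
    ∑ k ∈ Icc 1 m, ∑ P ∈ univ.filter (IsPartitionInto m k), F P =
      ∑ Q : Finpartition (univ : Finset (Fin m)), F Q.parts := by
  simp only [sum_isPartitionInto_eq_sum_finpartition]
  have : NeZero m := ⟨by lia⟩
  refine sum_fiberwise_of_maps_to (fun Q _ ↦ mem_Icc.2 ⟨?_, ?_⟩) _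
  · exact card_pos.2 (Q.parts_nonempty univ_nonempty.ne_empty)
  · simpa using Q.card_parts_le_card

end IsPartitionInto

section ChainRule

open Finset

variable {𝕜 X Y V : Type*} [NontriviallyNormedField 𝕜]
  [NormedAddCommGroup X] [NormedSpace 𝕜 X] [NormedAddCommGroup Y] [NormedSpace 𝕜 Y]
  [NormedAddCommGroup V] [NormedSpace 𝕜 V] {φ : X → Y} {f : Y → V} {x : X}

variable (𝕜) in
/-- The derivative `∇^{|S|} φ|_x (∨_{i ∈ S} v_i)` of order `|S|` in the directions indexed by `S`,
inserted in increasing order of their indices. -/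
def iteratedFDerivAlong {ι : Type*} [LinearOrder ι] (φ : X → Y) (x : X) (v : ι → X)
    (S : Finset ι) : Y :=
  iteratedFDeriv 𝕜 #S φ x fun i ↦ v (S.orderEmbOfFin rfl i)

variable (𝕜) in
/-- The summand `∇^k f|_{φ x} (∇^{|P₁|} φ|_x (∨_{i ∈ P₁} v_i), …, ∇^{|P_k|} φ|_x (∨_{i ∈ P_k} v_i))`
of the chain rule for the partition `P = {P₁, …, P_k}`, enumerated by `Finset.equivFin`. -/
def chainRuleTerm {ι : Type*} [LinearOrder ι] (f : Y → V) (φ : X → Y) (x : X) (v : ι → X)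
    (P : Finset (Finset ι)) : V :=
  iteratedFDeriv 𝕜 #P f (φ x) fun j ↦ iteratedFDerivAlong 𝕜 φ x v (P.equivFin.symm j)

lemma iteratedFDeriv_comp_strictMono {ι : Type*} [LinearOrder ι] {k : ℕ} {S : Finset ι}
    (hS : #S = k) {e : Fin k → ι} (he : StrictMono e) (heS : ∀ i, e i ∈ S) (v : ι → X) :
    iteratedFDeriv 𝕜 k φ x (v ∘ e) = iteratedFDerivAlong 𝕜 φ x v S := by
  subst hS
  rw [orderEmbOfFin_unique rfl heS he]
  rfl

lemma chainRuleTerm_eq_of_equiv {ι : Type*} [LinearOrder ι] {k : ℕ} {P : Finset (Finset ι)}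
    (hf : ContDiffAt 𝕜 (minSmoothness 𝕜 k) f (φ x)) (e : Fin k ≃ P) (v : ι → X) :
    chainRuleTerm 𝕜 f φ x v P =
      iteratedFDeriv 𝕜 k f (φ x) fun i ↦ iteratedFDerivAlong 𝕜 φ x v (e i) := by
  rw [chainRuleTerm, ← iteratedFDeriv_comp_equiv hf (e.trans P.equivFin)]
  simp [Function.comp_def]

lemma compAlongOrderedFinpartition_ftaylorSeries_apply {m : ℕ}
    (hf : ContDiffAt 𝕜 (minSmoothness 𝕜 m) f (φ x)) (c : OrderedFinpartition m)
    (v : Fin m → X) :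
    (ftaylorSeries 𝕜 f (φ x)).compAlongOrderedFinpartition (ftaylorSeries 𝕜 φ x) c v =
      chainRuleTerm 𝕜 f φ x v (finpartitionOfOrdered c).parts := by
  have hf' : ContDiffAt 𝕜 (minSmoothness 𝕜 c.length) f (φ x) :=
    hf.of_le (minSmoothness_monotone (mod_cast c.length_le))
  rw [chainRuleTerm_eq_of_equiv hf' (orderedPartEquiv c),
    FormalMultilinearSeries.compAlongOrderedFinpartition_apply]
  refine congrArg (iteratedFDeriv 𝕜 c.length f (φ x)) (funext fun i ↦ ?_)
  exact iteratedFDeriv_comp_strictMono (card_orderedPart c i) (c.emb_strictMono i)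
    (emb_mem_orderedPart c i) v

theorem iteratedFDeriv_comp_eq_sum_finpartition {m : ℕ} (hφ : ContDiffAt 𝕜 m φ x)
    (hf : ContDiffAt 𝕜 (minSmoothness 𝕜 m) f (φ x)) (v : Fin m → X) :
    iteratedFDeriv 𝕜 m (f ∘ φ) x v =
      ∑ P : Finpartition (univ : Finset (Fin m)), chainRuleTerm 𝕜 f φ x v P.parts := by
  rw [iteratedFDeriv_comp (hf.of_le le_minSmoothness) hφ le_rfl,
    FormalMultilinearSeries.taylorComp, _root_.sum_apply]
  exact Fintype.sum_equiv orderedFinpartitionEquivFinpartition _ _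
    fun c ↦ compAlongOrderedFinpartition_ftaylorSeries_apply hf c v

theorem higher_order_chain_rule_general {m : ℕ} (hm : 1 ≤ m) (hφ : ContDiffAt 𝕜 m φ x)
    (hf : ContDiffAt 𝕜 (minSmoothness 𝕜 m) f (φ x)) :
    ContDiffAt 𝕜 m (f ∘ φ) x ∧
      ∀ v : Fin m → X,
        iteratedFDeriv 𝕜 m (f ∘ φ) x v =
          ∑ k ∈ Icc 1 m, ∑ P ∈ univ.filter (IsPartitionInto m k),
            iteratedFDeriv 𝕜 #P f (φ x) (fun j : Fin #P ↦
              iteratedFDeriv 𝕜 #(P.equivFin.symm j : Finset (Fin m)) φ x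
                (fun i ↦ v ((P.equivFin.symm j : Finset (Fin m)).orderEmbOfFin rfl i))) := by
  refine ⟨(hf.of_le le_minSmoothness).comp x hφ, fun v ↦ ?_⟩
  rw [iteratedFDeriv_comp_eq_sum_finpartition hφ hf]
  exact (sum_Icc_sum_isPartitionInto hm (chainRuleTerm 𝕜 f φ x v)).symm

end ChainRule

/-- Higher-order chain rule for the composition of two maps between Banach spaces,
expressed via set partitions (Proposition `prop:higherorderchainrule`). -/
theorem higher_order_chain_rule
    {X Y V : Type*}
    [NormedAddCommGroup X] [NormedSpace ℝ X] [CompleteSpace X]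
    [NormedAddCommGroup Y] [NormedSpace ℝ Y] [CompleteSpace Y]
    [NormedAddCommGroup V] [NormedSpace ℝ V] [CompleteSpace V]
    (Ω : Set X) (Ω' : Set Y) (hΩ : IsOpen Ω) (hΩ' : IsOpen Ω')
    (φ : X → Y) (f : Y → V) (hmap : Set.MapsTo φ Ω Ω')
    (m : ℕ) (hm : 1 ≤ m) (x : X) (hx : x ∈ Ω)
    (hφ : ContDiffAt ℝ m φ x) (hf : ContDiffAt ℝ m f (φ x)) :
    ContDiffAt ℝ m (f ∘ φ) x ∧
      ∀ v : Fin m → X,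
        iteratedFDeriv ℝ m (f ∘ φ) x v =
          ∑ k ∈ Finset.Icc 1 m, ∑ P ∈ Finset.univ.filter (IsPartitionInto m k),
            iteratedFDeriv ℝ P.card f (φ x) (fun j : Fin P.card =>
              iteratedFDeriv ℝ ((P.equivFin.symm j : Finset (Fin m))).card φ x
                (fun i => v (((P.equivFin.symm j : Finset (Fin m))).orderEmbOfFin rfl i))) := by
  exact higher_order_chain_rule_general hm hφ (by simpa using hf)
end
end

section
/- Let Ω ⊆ ℝ^N be open, V a Banach space, m ∈ ℕ₀, and 𝒜 a Musielak-Orlicz integrand on Ω such that L^𝒜(Ω,V) embeds into L¹_loc(Ω,V). Then the space W^{m,𝒜,TV}(Ω,V) of functions u ∈ W^{m,𝒜}(Ω,V) whose m-th weak derivative has bounded variation, equipped with the norm ‖u‖_{W^{m,𝒜,TV}} := ‖u‖_{W^{m,𝒜}} + TV(∇^m u, Ω), is a Banach space. -/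
open MeasureTheory
open scoped ENNReal NNReal

noncomputable section

/-- A Musielak-Orlicz integrand on the set `Ω`: a measurable function
`𝒜 : Ω × [0,∞] → [0,∞]` with `𝒜(x,0) = 0`, `𝒜(x,·)` convex, left-continuous and
non-decreasing, `𝒜(x,·)` not identically zero for almost all `x ∈ Ω`, and
`𝒜(·,ξ)` measurable for each `ξ`. -/
structure MusielakOrlicz {E : Type*} [MeasureSpace E] (Ω : Set E) where
  toFun : E → ℝ≥0∞ → ℝ≥0∞
  measurable' : ∀ ξ : ℝ≥0∞, Measurable fun x => toFun x ξ
  map_zero' : ∀ x, toFun x 0 = 0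
  mono' : ∀ x, Monotone (toFun x)
  convex' : ∀ x, ∀ t : ℝ≥0∞, t ≤ 1 → ∀ a b : ℝ≥0∞,
    toFun x (t * a + (1 - t) * b) ≤ t * toFun x a + (1 - t) * toFun x b
  leftCont' : ∀ x, ∀ ξ : ℝ≥0∞, toFun x ξ = ⨆ (η : ℝ≥0∞) (_ : η < ξ), toFun x η
  nontrivial' : ∀ᵐ x ∂(volume.restrict Ω), ∃ ξ, toFun x ξ ≠ 0

/-- The Luxemburg norm `‖u‖_{L^𝒜(Ω)} = inf { λ > 0 : ∫_Ω 𝒜(x,|u(x)|/λ) dx ≤ 1 }`,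
defined for a raw integrand `A`. -/
def luxNorm {E V : Type*} [MeasureSpace E] [NormedAddCommGroup V]
    (A : E → ℝ≥0∞ → ℝ≥0∞) (Ω : Set E) (u : E → V) : ℝ≥0∞ :=
  sInf {l : ℝ≥0∞ | 0 < l ∧ ∫⁻ x in Ω, A x ((‖u x‖₊ : ℝ≥0∞) / l) ≤ 1}

/-- Membership in the Musielak-Orlicz space `L^𝒜(Ω,V)`: the linear span of the set of
(a.e. strongly measurable) functions `u` with `∫_Ω 𝒜(x,|u(x)|) dx < ∞`. -/
def MemOrlicz {E V : Type*} [MeasureSpace E] [NormedAddCommGroup V] [NormedSpace ℝ V]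
    (A : E → ℝ≥0∞ → ℝ≥0∞) (Ω : Set E) (u : E → V) : Prop :=
  u ∈ Submodule.span ℝ
    {v : E → V | AEStronglyMeasurable v (volume.restrict Ω) ∧
      ∫⁻ x in Ω, A x (‖v x‖₊ : ℝ≥0∞) < ⊤}

/-- The divergence `div Ψ = Σ_i ∇_{e_i} Ψ^i` of a vector field `Ψ` with values in
`ℝ^N ⊗ W*`, encoded as a field of operators `W →L[ℝ] ℝ^N` with components
`Ψ^i = ⟨e_i, Ψ⟩`. -/
def divg {N : ℕ} {W : Type*} [NormedAddCommGroup W] [NormedSpace ℝ W]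
    (Ψ : EuclideanSpace ℝ (Fin N) → (W →L[ℝ] EuclideanSpace ℝ (Fin N)))
    (x : EuclideanSpace ℝ (Fin N)) : W →L[ℝ] ℝ :=
  ∑ i : Fin N,
    (EuclideanSpace.proj i).comp (fderiv ℝ Ψ x (EuclideanSpace.single i (1 : ℝ)))

/-- The set of admissible constants `C ≥ 0` in the bounded-variation inequality
`∫_Ω ⟨w, div Ψ⟩ ≤ C ‖Ψ‖_{L^∞}` over all smooth compactly supported test fields `Ψ`. -/
def TVSet {N : ℕ} {W : Type*} [NormedAddCommGroup W] [NormedSpace ℝ W]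
    (Ω : Set (EuclideanSpace ℝ (Fin N))) (w : EuclideanSpace ℝ (Fin N) → W) : Set ℝ :=
  {C | 0 ≤ C ∧
    ∀ Ψ : EuclideanSpace ℝ (Fin N) → (W →L[ℝ] EuclideanSpace ℝ (Fin N)),
      ContDiff ℝ (⊤ : ℕ∞) Ψ → HasCompactSupport Ψ → tsupport Ψ ⊆ Ω →
      ∫ x in Ω, divg Ψ x (w x) ≤ C * ⨆ x, ‖Ψ x‖}

/-- `w` has bounded variation over `Ω`. -/
def HasBV {N : ℕ} {W : Type*} [NormedAddCommGroup W] [NormedSpace ℝ W]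
    (Ω : Set (EuclideanSpace ℝ (Fin N))) (w : EuclideanSpace ℝ (Fin N) → W) : Prop :=
  (TVSet Ω w).Nonempty

/-- The total variation `TV(w,Ω)`: the smallest admissible constant. -/
noncomputable def tv {N : ℕ} {W : Type*} [NormedAddCommGroup W] [NormedSpace ℝ W]
    (Ω : Set (EuclideanSpace ℝ (Fin N))) (w : EuclideanSpace ℝ (Fin N) → W) : ℝ :=
  sInf (TVSet Ω w)

/-- `w` is the `m`-th order weak derivative of `u` on the open set `Ω`. -/
def HasWeakDerivOn {E W : Type*}
    [NormedAddCommGroup E] [NormedSpace ℝ E] [MeasureSpace E]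
    [NormedAddCommGroup W] [NormedSpace ℝ W]
    (m : ℕ) (Ω : Set E) (u : E → W)
    (w : E → ContinuousMultilinearMap ℝ (fun _ : Fin m => E) W) : Prop :=
  ∀ ψ : E → (W →L[ℝ] ℝ), ContDiff ℝ (⊤ : ℕ∞) ψ → HasCompactSupport ψ → tsupport ψ ⊆ Ω →
    ∀ v : Fin m → E,
      ∫ x in Ω, iteratedFDeriv ℝ m ψ x v (u x) =
        (-1 : ℝ) ^ m * ∫ x in Ω, ψ x (w x v)

/-!
`L^𝒜` is complete by a Riesz–Fischer argument: convexity and left-continuity of `𝒜(x,·)` give the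
countable Jensen inequality `𝒜(x, ∑ pₙ aₙ) ≤ ∑ pₙ 𝒜(x, aₙ)` for `∑ pₙ ≤ 1`, so that a rapidly
Cauchy sequence has almost everywhere finite total length. The same inequality shows that the set
inclusion `L^𝒜 ⊆ L¹_loc` is automatically continuous. A sequence which is Cauchy in
`W^{m,𝒜,TV}` therefore converges, at every order `k ≤ m`, in `L^𝒜` and in `L¹_loc`. Both the
identities defining weak derivatives and the inequalities defining the total variation pair with a
continuous compactly supported field, hence pass to `L¹_loc` limits; applied to `w j - w k` as
`k → ∞`, the latter give the convergence of the total variations.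
-/

section

open Filter Topology

namespace MusielakOrlicz

section Pointwise

variable {E : Type*} [MeasureSpace E] {Ω : Set E} (𝒜 : MusielakOrlicz Ω)

theorem measurable_comp {φ : E → ℝ≥0∞} (hφ : Measurable φ) :
    Measurable fun x => 𝒜.toFun x (φ x) := by
  obtain ⟨s, hs, hd⟩ := TopologicalSpace.exists_countable_dense ℝ≥0∞
  -- By left-continuity it suffices to approach `φ x` from below through the countable set `s`.
  have sup_eq : (fun x => 𝒜.toFun x (φ x)) =
      fun x => ⨆ q ∈ s, {y | q < φ y}.indicator (fun y => 𝒜.toFun y q) x := by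
    funext x
    refine le_antisymm ?_ <| iSup₂_le fun q _ =>
      Set.indicator_apply_le' (fun h : q < φ x => 𝒜.mono' x h.le) fun _ => zero_le
    rw [𝒜.leftCont' x (φ x)]
    refine iSup₂_le fun η hη => ?_
    obtain ⟨q, hqs, hηq, hqφ⟩ := hd.exists_between hη
    refine le_iSup₂_of_le q hqs ?_
    rw [Set.indicator_of_mem (by exact hqφ)]
    exact 𝒜.mono' x hηq.le
  rw [sup_eq]
  exact .biSup s hs fun q _ =>
    (𝒜.measurable' q).indicator (measurableSet_lt measurable_const hφ)

theorem aemeasurable_comp {μ : Measure E} {φ : E → ℝ≥0∞} (hφ : AEMeasurable φ μ) :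
    AEMeasurable (fun x => 𝒜.toFun x (φ x)) μ :=
  ⟨_, 𝒜.measurable_comp hφ.measurable_mk, hφ.ae_eq_mk.mono fun x hx => congrArg (𝒜.toFun x) hx⟩

theorem le_liminf {ι : Type*} {l : Filter ι} (x : E) {a : ι → ℝ≥0∞} {b : ℝ≥0∞}
    (h : Tendsto a l (𝓝 b)) : 𝒜.toFun x b ≤ liminf (fun i => 𝒜.toFun x (a i)) l := by
  rw [𝒜.leftCont' x b]
  refine iSup₂_le fun η hη => le_liminf_of_le (by isBoundedDefault) ?_
  filter_upwards [h.eventually_const_lt hη] with i hi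
  exact 𝒜.mono' x hi.le

theorem map_sum_mul_le {ι : Type*} (x : E) (s : Finset ι) (a : ι → ℝ≥0∞) {p : ι → ℝ≥0∞}
    (hp : ∑ i ∈ s, p i ≤ 1) :
    𝒜.toFun x (∑ i ∈ s, p i * a i) ≤ ∑ i ∈ s, p i * 𝒜.toFun x (a i) := by
  classical
  induction s using Finset.induction_on generalizing p with
  | empty => simp [𝒜.map_zero']
  | insert j s hj ih =>
    rw [Finset.sum_insert hj] at hp
    have hj_le : p j ≤ 1 := le_self_add.trans hp
    have rest_le : ∑ i ∈ s, p i ≤ 1 - p j :=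
      ENNReal.le_sub_of_add_le_left (hj_le.trans_lt ENNReal.one_lt_top).ne hp
    have normalized_le : ∑ i ∈ s, p i / (1 - p j) ≤ 1 := by
      simpa only [div_eq_mul_inv, ← Finset.sum_mul] using ENNReal.div_le_of_le_mul (by simpa)
    have renormalize : ∀ b : ι → ℝ≥0∞,
        ∑ i ∈ s, p i * b i = (1 - p j) * ∑ i ∈ s, p i / (1 - p j) * b i := fun b => by
      rw [Finset.mul_sum]
      refine Finset.sum_congr rfl fun i hi => ?_
      rw [← mul_assoc, ENNReal.mul_div_cancel' (fun h => ?_) (by simp)]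
      simpa [h, hi] using (Finset.single_le_sum_of_canonicallyOrdered hi).trans rest_le
    rw [Finset.sum_insert hj, Finset.sum_insert hj, renormalize, renormalize]
    exact (𝒜.convex' x (p j) hj_le _ _).trans (by gcongr; exact ih normalized_le)

theorem map_tsum_mul_le {ι : Type*} (x : E) (a : ι → ℝ≥0∞) {p : ι → ℝ≥0∞}
    (hp : ∑' i, p i ≤ 1) :
    𝒜.toFun x (∑' i, p i * a i) ≤ ∑' i, p i * 𝒜.toFun x (a i) :=
  (𝒜.le_liminf x ENNReal.summable.hasSum).trans <|
    liminf_le_of_frequently_le' <| .of_forall fun s =>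
      (𝒜.map_sum_mul_le x s a ((ENNReal.sum_le_tsum s).trans hp)).trans (ENNReal.sum_le_tsum s)

theorem ae_map_top : ∀ᵐ x ∂volume.restrict Ω, 𝒜.toFun x ⊤ = ⊤ := by
  filter_upwards [𝒜.nontrivial'] with x ⟨ξ, hξ⟩
  have top_ne_zero : 𝒜.toFun x ⊤ ≠ 0 := fun h => hξ (le_zero_iff.1 (h ▸ 𝒜.mono' x le_top))
  have le_half : 𝒜.toFun x ⊤ ≤ 𝒜.toFun x ⊤ / 2 := by
    simpa [𝒜.map_zero', ENNReal.div_eq_inv_mul] using 𝒜.convex' x 2⁻¹ (by simp) ⊤ 0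
  by_contra h
  exact le_half.not_gt (ENNReal.half_lt_self top_ne_zero h)

end Pointwise

section Modular

variable {E : Type*} [MeasureSpace E] {Ω : Set E} (𝒜 : MusielakOrlicz Ω)

/-- The modular `ρ(φ) = ∫_Ω 𝒜(x, φ(x)) dx`, as a functional of `φ = |u|`. -/
def modular (φ : E → ℝ≥0∞) : ℝ≥0∞ := ∫⁻ x in Ω, 𝒜.toFun x (φ x)

variable {𝒜}

theorem modular_mono {φ ψ : E → ℝ≥0∞} (h : φ ≤ ψ) : 𝒜.modular φ ≤ 𝒜.modular ψ :=
  lintegral_mono fun x => 𝒜.mono' x (h x)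

theorem modular_congr_ae {φ ψ : E → ℝ≥0∞} (h : φ =ᵐ[volume.restrict Ω] ψ) :
    𝒜.modular φ = 𝒜.modular ψ :=
  lintegral_congr_ae <| h.mono fun x hx => by simp only [hx]

theorem modular_mul_add_mul_le {φ ψ : E → ℝ≥0∞} (hφ : AEMeasurable φ (volume.restrict Ω))
    {t : ℝ≥0∞} (ht : t ≤ 1) :
    𝒜.modular (fun x => t * φ x + (1 - t) * ψ x) ≤
      t * 𝒜.modular φ + (1 - t) * 𝒜.modular ψ :=
  calc 𝒜.modular (fun x => t * φ x + (1 - t) * ψ x)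
      ≤ ∫⁻ x in Ω, t * 𝒜.toFun x (φ x) + (1 - t) * 𝒜.toFun x (ψ x) :=
        lintegral_mono fun x => 𝒜.convex' x t ht _ _
    _ = t * 𝒜.modular φ + (1 - t) * 𝒜.modular ψ := by
        rw [lintegral_add_left' ((𝒜.aemeasurable_comp hφ).const_mul t),
          lintegral_const_mul' _ _ (ht.trans_lt ENNReal.one_lt_top).ne,
          lintegral_const_mul' _ _ (by finiteness), modular, modular]

theorem modular_min_mul_add_lt_top {φ ψ : E → ℝ≥0∞} (hφ_meas : AEMeasurable φ (volume.restrict Ω))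
    {c d : ℝ≥0} (hφ : 𝒜.modular (fun x => c * φ x) < ⊤) (hψ : 𝒜.modular (fun x => d * ψ x) < ⊤) :
    𝒜.modular (fun x => ((2⁻¹ * min c d : ℝ≥0) : ℝ≥0∞) * (φ x + ψ x)) < ⊤ := by
  have le_average : ∀ x, ((2⁻¹ * min c d : ℝ≥0) : ℝ≥0∞) * (φ x + ψ x) ≤
      2⁻¹ * (c * φ x) + (1 - 2⁻¹) * (d * ψ x) := fun x => by
    rw [ENNReal.one_sub_inv_two, ENNReal.coe_mul, ENNReal.coe_inv two_ne_zero, ENNReal.coe_ofNat,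
      mul_add, mul_assoc, mul_assoc]
    gcongr
    exacts [min_le_left c d, min_le_right c d]
  calc 𝒜.modular (fun x => ((2⁻¹ * min c d : ℝ≥0) : ℝ≥0∞) * (φ x + ψ x))
      ≤ 𝒜.modular (fun x => 2⁻¹ * (c * φ x) + (1 - 2⁻¹) * (d * ψ x)) := modular_mono le_average
    _ ≤ 2⁻¹ * 𝒜.modular (fun x => c * φ x) + (1 - 2⁻¹) * 𝒜.modular (fun x => d * ψ x) :=
        modular_mul_add_mul_le (hφ_meas.const_mul _) (by simp)
    _ < ⊤ := by finiteness

theorem modular_tsum_mul_le_one {ι : Type*} [Countable ι] {φ : ι → E → ℝ≥0∞}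
    (hφ : ∀ i, AEMeasurable (φ i) (volume.restrict Ω)) (hφ_le : ∀ i, 𝒜.modular (φ i) ≤ 1)
    {p : ι → ℝ≥0∞} (hp : ∑' i, p i ≤ 1) :
    𝒜.modular (fun x => ∑' i, p i * φ i x) ≤ 1 :=
  calc 𝒜.modular (fun x => ∑' i, p i * φ i x)
      ≤ ∫⁻ x in Ω, ∑' i, p i * 𝒜.toFun x (φ i x) :=
        lintegral_mono fun x => 𝒜.map_tsum_mul_le x (φ · x) hp
    _ = ∑' i, p i * 𝒜.modular (φ i) := by
        rw [lintegral_tsum fun i => (𝒜.aemeasurable_comp (hφ i)).const_mul _]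
        exact tsum_congr fun i => lintegral_const_mul'' _ (𝒜.aemeasurable_comp (hφ i))
    _ ≤ ∑' i, p i := ENNReal.tsum_le_tsum fun i => mul_le_of_le_one_right' (hφ_le i)
    _ ≤ 1 := hp

theorem modular_le_liminf {ι : Type*} {l : Filter ι} [l.IsCountablyGenerated]
    {φ : ι → E → ℝ≥0∞} {ψ : E → ℝ≥0∞} (hφ : ∀ i, AEMeasurable (φ i) (volume.restrict Ω))
    (h : ∀ᵐ x ∂volume.restrict Ω, Tendsto (φ · x) l (𝓝 (ψ x))) :
    𝒜.modular ψ ≤ liminf (fun i => 𝒜.modular (φ i)) l :=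
  (lintegral_mono_ae <| h.mono fun x hx => 𝒜.le_liminf x hx).trans <|
    lintegral_liminf_le' fun i => 𝒜.aemeasurable_comp (hφ i)

theorem ae_lt_top_of_modular_ne_top {φ : E → ℝ≥0∞} (hφ : AEMeasurable φ (volume.restrict Ω))
    (h : 𝒜.modular φ ≠ ⊤) : ∀ᵐ x ∂volume.restrict Ω, φ x < ⊤ := by
  filter_upwards [ae_lt_top' (𝒜.aemeasurable_comp hφ) h, 𝒜.ae_map_top] with x hx hx_top
  refine lt_top_iff_ne_top.2 fun h_top => hx.ne ?_
  rw [h_top, hx_top]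

end Modular

section LuxemburgNorm

variable {E : Type*} [MeasureSpace E] {Ω : Set E} {𝒜 : MusielakOrlicz Ω}
  {W : Type*} [NormedAddCommGroup W]

theorem modular_div_le_one_of_luxNorm_lt {f : E → W} {c : ℝ≥0∞}
    (h : luxNorm 𝒜.toFun Ω f < c) : 𝒜.modular (fun x => ‖f x‖ₑ / c) ≤ 1 := by
  obtain ⟨c', ⟨-, hc'⟩, hlt⟩ := sInf_lt_iff.1 h
  exact (modular_mono fun x => ENNReal.div_le_div_left hlt.le _).trans hc'

theorem luxNorm_le_of_modular_div_le_one {f : E → W} {c : ℝ≥0∞} (hc : 0 < c)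
    (h : 𝒜.modular (fun x => ‖f x‖ₑ / c) ≤ 1) : luxNorm 𝒜.toFun Ω f ≤ c :=
  sInf_le ⟨hc, h⟩

theorem luxNorm_le_of_ae_tendsto {ι : Type*} {l : Filter ι} [l.IsCountablyGenerated]
    {f : ι → E → W} {g : E → W} (hf : ∀ i, AEStronglyMeasurable (f i) (volume.restrict Ω))
    (hfg : ∀ᵐ x ∂volume.restrict Ω, Tendsto (f · x) l (𝓝 (g x))) {c : ℝ≥0∞}
    (hc : ∃ᶠ i in l, luxNorm 𝒜.toFun Ω (f i) ≤ c) : luxNorm 𝒜.toFun Ω g ≤ c := by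
  refine le_of_forall_gt_imp_ge_of_dense fun d hd => ?_
  have hd_pos : 0 < d := hd.pos
  refine luxNorm_le_of_modular_div_le_one hd_pos ?_
  calc 𝒜.modular (fun x => ‖g x‖ₑ / d)
      ≤ liminf (fun i => 𝒜.modular fun x => ‖f i x‖ₑ / d) l :=
        modular_le_liminf (fun i => (hf i).enorm.div_const d) <| hfg.mono fun x hx =>
          ENNReal.Tendsto.div_const hx.enorm (.inr hd_pos.ne')
    _ ≤ 1 := liminf_le_of_frequently_le' <| hc.mono fun i hi =>
        modular_div_le_one_of_luxNorm_lt (hi.trans_lt hd)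

/-- The increments of `f`, divided by their weights `p n`, have modular at most one, so their
`p`-weighted sum, the total length of the path `n ↦ f n x`, is almost everywhere finite. -/
theorem ae_exists_tendsto_of_luxNorm_sub_lt [CompleteSpace W] {f : ℕ → E → W}
    (hf : ∀ n, AEStronglyMeasurable (f n) (volume.restrict Ω)) {p : ℕ → ℝ≥0∞}
    (hp : ∑' n, p n ≤ 1) (hfp : ∀ n, luxNorm 𝒜.toFun Ω (f n - f (n + 1)) < p n) :
    ∀ᵐ x ∂volume.restrict Ω, ∃ y, Tendsto (f · x) atTop (𝓝 y) := by
  have incr_meas : ∀ n, AEMeasurable (fun x => ‖(f n - f (n + 1)) x‖ₑ / p n)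
      (volume.restrict Ω) := fun n => ((hf n).sub (hf (n + 1))).enorm.div_const _
  have length_lt_top :
      ∀ᵐ x ∂volume.restrict Ω, ∑' n, p n * (‖(f n - f (n + 1)) x‖ₑ / p n) < ⊤ :=
    ae_lt_top_of_modular_ne_top (AEMeasurable.tsum fun n => (incr_meas n).const_mul _)
      ((modular_tsum_mul_le_one incr_meas
        (fun n => modular_div_le_one_of_luxNorm_lt (hfp n)) hp).trans_lt ENNReal.one_lt_top).ne
  filter_upwards [length_lt_top] with x hx
  refine cauchySeq_tendsto_of_complete (cauchySeq_of_edist_le_of_tsum_ne_top _ (fun n => ?_) hx.ne)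
  have p_ne_top : p n ≠ ⊤ :=
    ((ENNReal.le_tsum n).trans hp |>.trans_lt ENNReal.one_lt_top).ne
  rw [ENNReal.mul_div_cancel (hfp n).pos.ne' p_ne_top, edist_eq_enorm_sub, Pi.sub_apply]

end LuxemburgNorm

end MusielakOrlicz

section OrliczSpace

variable {E : Type*} [MeasureSpace E] {Ω : Set E}
  {W : Type*} [NormedAddCommGroup W] [NormedSpace ℝ W]

theorem MemOrlicz.aestronglyMeasurable {A : E → ℝ≥0∞ → ℝ≥0∞} {f : E → W}
    (hf : MemOrlicz A Ω f) : AEStronglyMeasurable f (volume.restrict Ω) := by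
  induction hf using Submodule.span_induction with
  | mem f hf => exact hf.1
  | zero => exact aestronglyMeasurable_const
  | add f g _ _ hf hg => exact hf.add hg
  | smul a f _ hf => exact hf.const_smul a

variable {𝒜 : MusielakOrlicz Ω}

theorem MemOrlicz.exists_modular_mul_lt_top {f : E → W} (hf : MemOrlicz 𝒜.toFun Ω f) :
    ∃ c : ℝ≥0, 0 < c ∧ 𝒜.modular (fun x => c * ‖f x‖ₑ) < ⊤ := by
  induction hf using Submodule.span_induction with
  | mem f hf => exact ⟨1, one_pos, by simpa [MusielakOrlicz.modular, enorm_eq_nnnorm] using hf.2⟩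
  | zero => exact ⟨1, one_pos, by simp [MusielakOrlicz.modular, 𝒜.map_zero']⟩
  | add f g hf _ ihf ihg =>
    obtain ⟨c, hc_pos, hc⟩ := ihf
    obtain ⟨d, hd_pos, hd⟩ := ihg
    have norm_f_meas : AEMeasurable (‖f ·‖ₑ) (volume.restrict Ω) :=
      (MemOrlicz.aestronglyMeasurable hf).enorm
    refine ⟨2⁻¹ * min c d, by positivity, lt_of_le_of_lt (MusielakOrlicz.modular_mono fun x => ?_)
      (MusielakOrlicz.modular_min_mul_add_lt_top norm_f_meas hc hd)⟩
    gcongr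
    exact enorm_add_le _ _
  | smul a f _ ih =>
    obtain ⟨c, hc_pos, hc⟩ := ih
    refine ⟨c / (‖a‖₊ + 1), by positivity, lt_of_le_of_lt (MusielakOrlicz.modular_mono ?_) hc⟩
    intro x
    have hle : c / (‖a‖₊ + 1) * ‖a‖₊ ≤ c := by
      rw [div_mul_eq_mul_div]
      exact div_le_of_le_mul₀ (by positivity) (by positivity) (by gcongr; simp)
    simp only [Pi.smul_apply, enorm_smul, ← mul_assoc]
    gcongr
    rw [enorm_eq_nnnorm]
    exact_mod_cast hle

theorem memOrlicz_iff_exists_modular_mul_lt_top {f : E → W} :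
    MemOrlicz 𝒜.toFun Ω f ↔ AEStronglyMeasurable f (volume.restrict Ω) ∧
      ∃ c : ℝ≥0, 0 < c ∧ 𝒜.modular (fun x => c * ‖f x‖ₑ) < ⊤ := by
  refine ⟨fun hf => ⟨hf.aestronglyMeasurable, hf.exists_modular_mul_lt_top⟩, ?_⟩
  rintro ⟨f_meas, c, hc_pos, hc⟩
  rw [MemOrlicz, ← inv_smul_smul₀ (NNReal.coe_pos.2 hc_pos).ne' f]
  refine Submodule.smul_mem _ _ (Submodule.subset_span ⟨f_meas.const_smul _, ?_⟩)
  refine lt_of_eq_of_lt (lintegral_congr fun x => ?_) hc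
  congr 1
  exact (enorm_smul (c : ℝ) (f x)).trans (by rw [NNReal.enorm_eq])

theorem MemOrlicz.norm {f : E → W} (hf : MemOrlicz 𝒜.toFun Ω f) :
    MemOrlicz 𝒜.toFun Ω (fun x => ‖f x‖) := by
  rw [memOrlicz_iff_exists_modular_mul_lt_top] at hf ⊢
  simpa only [enorm_norm] using ⟨hf.1.norm, hf.2⟩

theorem memOrlicz_of_luxNorm_lt_top {f : E → W}
    (f_meas : AEStronglyMeasurable f (volume.restrict Ω)) (hf : luxNorm 𝒜.toFun Ω f < ⊤) :
    MemOrlicz 𝒜.toFun Ω f := by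
  obtain ⟨c, hfc, hc⟩ := exists_between hf
  lift c to ℝ≥0 using hc.ne
  have hc_pos : 0 < c := by exact_mod_cast hfc.pos
  refine memOrlicz_iff_exists_modular_mul_lt_top.2 ⟨f_meas, c⁻¹, inv_pos.2 hc_pos, ?_⟩
  simpa only [ENNReal.coe_inv hc_pos.ne', ENNReal.div_eq_inv_mul] using
    (MusielakOrlicz.modular_div_le_one_of_luxNorm_lt hfc).trans_lt ENNReal.one_lt_top

theorem exists_memOrlicz_tendsto_luxNorm_sub [CompleteSpace W] {f : ℕ → E → W}
    (hf : ∀ n, MemOrlicz 𝒜.toFun Ω (f n))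
    (hcauchy : Tendsto (fun p : ℕ × ℕ => luxNorm 𝒜.toFun Ω (f p.1 - f p.2)) atTop (𝓝 0)) :
    ∃ g, MemOrlicz 𝒜.toFun Ω g ∧
      Tendsto (fun n => luxNorm 𝒜.toFun Ω (f n - g)) atTop (𝓝 0) := by
  have f_meas n := (hf n).aestronglyMeasurable
  obtain ⟨p, hp_pos, hp⟩ := ENNReal.exists_pos_sum_of_countable' one_ne_zero ℕ
  obtain ⟨φ, φ_mono, hφ⟩ := extraction_forall_of_eventually' fun n =>
    eventually_atTop_prod_self.1 (hcauchy.eventually_lt_const (hp_pos n)) |>.imp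
      fun M hM K hK => fun j (hj : K ≤ j) => hM K j hK (hK.trans hj)
  obtain ⟨g, g_meas, hg⟩ := exists_stronglyMeasurable_limit_of_tendsto_ae
    (fun n => f_meas (φ n)) <|
      MusielakOrlicz.ae_exists_tendsto_of_luxNorm_sub_lt (fun n => f_meas (φ n)) hp.le fun n =>
        hφ n _ (φ_mono.monotone n.le_succ)
  have tendsto_zero : Tendsto (fun n => luxNorm 𝒜.toFun Ω (f n - g)) atTop (𝓝 0) := by
    refine ENNReal.tendsto_atTop_zero.2 fun ε hε => ?_
    obtain ⟨M, hM⟩ := eventually_atTop_prod_self.1 (hcauchy.eventually_lt_const hε)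
    refine ⟨M, fun j hj => MusielakOrlicz.luxNorm_le_of_ae_tendsto (l := atTop)
      (fun n => (f_meas j).sub (f_meas (φ n))) (hg.mono fun x hx => hx.const_sub _) ?_⟩
    refine (eventually_atTop.2 ⟨M, fun n hn => ?_⟩).frequently
    exact (hM j (φ n) hj (hn.trans (φ_mono.le_apply))).le
  refine ⟨g, ?_, tendsto_zero⟩
  obtain ⟨n, hn⟩ := (tendsto_zero.eventually_lt_const ENNReal.zero_lt_top).exists
  have sub_mem : MemOrlicz 𝒜.toFun Ω (f n - g) :=
    memOrlicz_of_luxNorm_lt_top ((f_meas n).sub g_meas.aestronglyMeasurable) hn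
  simpa only [MemOrlicz, sub_sub_cancel] using Submodule.sub_mem _ (hf n) sub_mem

end OrliczSpace

section LocalIntegrability

variable {E : Type*} [TopologicalSpace E] [MeasureSpace E] {Ω : Set E}
  {W : Type*} [NormedAddCommGroup W]

/-- The embedding of `L^𝒜` into `L¹_loc` for real-valued functions; it passes to every normed
space of values, see `MusielakOrlicz.EmbedsInL1Loc.locallyIntegrableOn`. -/
def MusielakOrlicz.EmbedsInL1Loc (𝒜 : MusielakOrlicz Ω) : Prop :=
  ∀ f : E → ℝ, MemOrlicz 𝒜.toFun Ω f → LocallyIntegrableOn f Ω volume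

/-- Convergence in `L¹_loc(Ω)`: convergence in `L¹(K)` for every compact `K ⊆ Ω`. -/
def TendstoL1LocOn {ι : Type*} (f : ι → E → W) (g : E → W) (l : Filter ι) (Ω : Set E) : Prop :=
  ∀ K, IsCompact K → K ⊆ Ω → Tendsto (fun i => ∫⁻ x in K, ‖f i x - g x‖ₑ) l (𝓝 0)

theorem TendstoL1LocOn.const_sub {ι : Type*} {f : ι → E → W} {g : E → W} {l : Filter ι}
    (h : TendstoL1LocOn f g l Ω) (a : E → W) :
    TendstoL1LocOn (fun i => a - f i) (a - g) l Ω := fun K hK hKΩ => by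
  simpa only [Pi.sub_apply, sub_sub_sub_cancel_left, enorm_sub_rev] using h K hK hKΩ

theorem TendstoL1LocOn.clm_apply {𝕜 W' : Type*} [NontriviallyNormedField 𝕜] [NormedSpace 𝕜 W]
    [NormedAddCommGroup W'] [NormedSpace 𝕜 W'] {ι : Type*} {f : ι → E → W} {g : E → W}
    {l : Filter ι} (h : TendstoL1LocOn f g l Ω) (T : W →L[𝕜] W') :
    TendstoL1LocOn (fun i x => T (f i x)) (fun x => T (g x)) l Ω := fun K hK hKΩ => by
  have bound_tendsto : Tendsto (fun i => ‖T‖ₑ * ∫⁻ x in K, ‖f i x - g x‖ₑ) l (𝓝 0) := by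
    simpa only [mul_zero] using ENNReal.Tendsto.const_mul (h K hK hKΩ) (.inr enorm_ne_top)
  refine tendsto_of_tendsto_of_tendsto_of_le_of_le tendsto_const_nhds bound_tendsto
    (fun _ => zero_le) fun i => ?_
  rw [← lintegral_const_mul' _ _ enorm_ne_top]
  exact lintegral_mono fun x => by simpa only [map_sub] using T.le_opENorm (f i x - g x)

namespace MusielakOrlicz.EmbedsInL1Loc

variable {𝒜 : MusielakOrlicz Ω}

theorem locallyIntegrableOn [NormedSpace ℝ W] (hemb : 𝒜.EmbedsInL1Loc) {f : E → W}
    (hf : MemOrlicz 𝒜.toFun Ω f) : LocallyIntegrableOn f Ω volume := fun x hx => by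
  obtain ⟨s, hs, hfs⟩ := hemb _ hf.norm x hx
  refine ⟨s ∩ Ω, inter_mem hs self_mem_nhdsWithin, ?_⟩
  have f_meas : AEStronglyMeasurable f (volume.restrict (s ∩ Ω)) :=
    hf.aestronglyMeasurable.mono_set Set.inter_subset_right
  exact (integrable_norm_iff f_meas).1 (hfs.mono_set Set.inter_subset_left)

theorem setLIntegral_lt_top (hemb : 𝒜.EmbedsInL1Loc) {φ : E → ℝ≥0∞}
    (φ_meas : AEMeasurable φ (volume.restrict Ω)) (hφ : 𝒜.modular φ < ⊤) {K : Set E}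
    (hK : IsCompact K) (hKΩ : K ⊆ Ω) : ∫⁻ x in K, φ x < ⊤ := by
  have enorm_eq : (fun x => ‖(φ x).toReal‖ₑ) =ᵐ[volume.restrict Ω] φ := by
    filter_upwards [ae_lt_top_of_modular_ne_top φ_meas hφ.ne] with x hx
    rw [Real.enorm_eq_ofReal ENNReal.toReal_nonneg, ENNReal.ofReal_toReal hx.ne]
  have mem : MemOrlicz 𝒜.toFun Ω fun x => (φ x).toReal :=
    Submodule.subset_span
      ⟨φ_meas.ennreal_toReal.aestronglyMeasurable, (modular_congr_ae enorm_eq).trans_lt hφ⟩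
  calc ∫⁻ x in K, φ x = ∫⁻ x in K, ‖(φ x).toReal‖ₑ :=
        lintegral_congr_ae (ae_restrict_of_ae_restrict_of_subset hKΩ enorm_eq.symm)
    _ < ⊤ := ((hemb _ mem).integrableOn_compact_subset hKΩ hK).2

/-- If the unit ball of the modular were unbounded in `L¹(K)`, a convex combination of elements
with rapidly growing `L¹(K)`-norms would lie in the unit ball but not in `L¹(K)`. -/
theorem exists_setLIntegral_le (hemb : 𝒜.EmbedsInL1Loc) {K : Set E}
    (hK : IsCompact K) (hKΩ : K ⊆ Ω) :
    ∃ C : ℝ≥0, ∀ φ, AEMeasurable φ (volume.restrict Ω) → 𝒜.modular φ ≤ 1 →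
      ∫⁻ x in K, φ x ≤ C := by
  by_contra! unbounded
  obtain ⟨p, hp_pos, hp⟩ := ENNReal.exists_pos_sum_of_countable one_ne_zero ℕ
  choose φ φ_meas hφ_le hφ using fun n : ℕ => unbounded (n / p n)
  have sum_lt_top : ∫⁻ x in K, ∑' n, p n * φ n x < ⊤ :=
    hemb.setLIntegral_lt_top (AEMeasurable.tsum fun n => (φ_meas n).const_mul _)
      ((modular_tsum_mul_le_one φ_meas hφ_le hp.le).trans_lt ENNReal.one_lt_top) hK hKΩ
  obtain ⟨n, hn⟩ := ENNReal.exists_nat_gt sum_lt_top.ne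
  refine hn.not_ge ?_
  calc (n : ℝ≥0∞) = p n * (n / p n : ℝ≥0) := by
        rw [← ENNReal.coe_mul, mul_div_cancel₀ _ (hp_pos n).ne', ENNReal.coe_natCast]
    _ ≤ p n * ∫⁻ x in K, φ n x := by gcongr; exact (hφ n).le
    _ = ∫⁻ x in K, p n * φ n x := (lintegral_const_mul' _ _ ENNReal.coe_ne_top).symm
    _ ≤ ∫⁻ x in K, ∑' n, p n * φ n x :=
        lintegral_mono fun x => ENNReal.le_tsum (f := fun n => p n * φ n x) n

theorem exists_setLIntegral_enorm_le_mul_luxNorm (hemb : 𝒜.EmbedsInL1Loc) {K : Set E}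
    (hK : IsCompact K) (hKΩ : K ⊆ Ω) :
    ∃ C : ℝ≥0, ∀ f : E → W, AEStronglyMeasurable f (volume.restrict Ω) →
      ∫⁻ x in K, ‖f x‖ₑ ≤ C * luxNorm 𝒜.toFun Ω f := by
  obtain ⟨C, hC⟩ := hemb.exists_setLIntegral_le hK hKΩ
  -- `C + 1` is positive, so that the product is `∞` whenever the Luxemburg norm is.
  refine ⟨C + 1, fun f f_meas => ?_⟩
  refine ENNReal.le_mul_of_forall_lt (.inl (by simp)) (.inl ENNReal.coe_ne_top)
    fun C' hC' c hc => ?_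
  obtain rfl | c_ne_top := eq_or_ne c ⊤
  · simp [ENNReal.mul_top hC'.pos.ne']
  have C_le : (C : ℝ≥0∞) ≤ C' := le_trans (by simp) hC'.le
  calc ∫⁻ x in K, ‖f x‖ₑ = ∫⁻ x in K, c * (‖f x‖ₑ / c) := by
        simp only [ENNReal.mul_div_cancel hc.pos.ne' c_ne_top]
    _ = c * ∫⁻ x in K, ‖f x‖ₑ / c := lintegral_const_mul' _ _ c_ne_top
    _ ≤ c * C := by
        gcongr
        exact hC _ (f_meas.enorm.div_const c) (modular_div_le_one_of_luxNorm_lt hc)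
    _ ≤ C' * c := by rw [mul_comm]; gcongr

theorem tendstoL1LocOn (hemb : 𝒜.EmbedsInL1Loc) {ι : Type*} {l : Filter ι}
    {f : ι → E → W} {g : E → W} (hf : ∀ i, AEStronglyMeasurable (f i) (volume.restrict Ω))
    (hg : AEStronglyMeasurable g (volume.restrict Ω))
    (h : Tendsto (fun i => luxNorm 𝒜.toFun Ω (f i - g)) l (𝓝 0)) :
    TendstoL1LocOn f g l Ω := fun K hK hKΩ => by
  obtain ⟨C, hC⟩ := hemb.exists_setLIntegral_enorm_le_mul_luxNorm (W := W) hK hKΩ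
  have bound_tendsto :
      Tendsto (fun i => (C : ℝ≥0∞) * luxNorm 𝒜.toFun Ω (f i - g)) l (𝓝 0) := by
    simpa only [mul_zero] using ENNReal.Tendsto.const_mul h (.inr ENNReal.coe_ne_top)
  exact tendsto_of_tendsto_of_tendsto_of_le_of_le tendsto_const_nhds bound_tendsto
    (fun _ => zero_le) fun i => hC _ ((hf i).sub hg)

end MusielakOrlicz.EmbedsInL1Loc

end LocalIntegrability

section Pairing

variable {E : Type*} [TopologicalSpace E] [MeasureSpace E] {Ω : Set E}
  {W : Type*} [NormedAddCommGroup W] [NormedSpace ℝ W] {L : E → W →L[ℝ] ℝ}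

theorem exists_lintegral_enorm_clm_apply_le (hL : Continuous L) (hL_supp : HasCompactSupport L) :
    ∃ C : ℝ≥0, ∀ f : E → W, ∫⁻ x, ‖L x (f x)‖ₑ ≤ C * ∫⁻ x in tsupport L, ‖f x‖ₑ := by
  obtain ⟨C, hC⟩ := hL_supp.exists_bound_of_continuous hL
  refine ⟨C.toNNReal, fun f => ?_⟩
  have support_subset : (fun x => ‖L x (f x)‖ₑ).support ⊆ tsupport L := fun x hx =>
    subset_tsupport L fun h => hx (by simp [h])
  rw [← lintegral_const_mul' _ _ ENNReal.coe_ne_top,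
    ← setLIntegral_eq_of_support_subset support_subset]
  refine lintegral_mono fun x => (L x).le_of_opENorm_le ?_ _
  rw [← ofReal_norm]
  exact ENNReal.ofReal_le_ofReal (hC x)

variable [OpensMeasurableSpace E]

theorem integrable_clm_apply_of_hasCompactSupport {f : E → W}
    (hf : LocallyIntegrableOn f Ω volume) (hL : Continuous L) (hL_supp : HasCompactSupport L)
    (hLΩ : tsupport L ⊆ Ω) : Integrable (fun x => L x (f x)) := by
  obtain ⟨C, hC⟩ := hL_supp.exists_bound_of_continuous hL
  have f_int : IntegrableOn f (tsupport L) := hf.integrableOn_compact_subset hLΩ hL_supp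
  have support_subset : (fun x => L x (f x)).support ⊆ tsupport L := fun x hx =>
    subset_tsupport L fun h => hx (by simp [h])
  rw [← integrableOn_iff_integrable_of_support_subset support_subset]
  refine (f_int.norm.const_mul C).mono' ?_ (.of_forall fun x => (L x).le_of_opNorm_le (hC x) _)
  exact (ContinuousLinearMap.apply ℝ ℝ (E := W)).aestronglyMeasurable_comp₂
    f_int.1 (hL.stronglyMeasurable_of_hasCompactSupport hL_supp).aestronglyMeasurable

theorem setIntegral_clm_apply_sub {f g : E → W} (hf : LocallyIntegrableOn f Ω volume)
    (hg : LocallyIntegrableOn g Ω volume) (hL : Continuous L) (hL_supp : HasCompactSupport L)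
    (hLΩ : tsupport L ⊆ Ω) :
    ∫ x in Ω, L x ((f - g) x) = (∫ x in Ω, L x (f x)) - ∫ x in Ω, L x (g x) := by
  simp only [Pi.sub_apply, map_sub]
  exact integral_sub (integrable_clm_apply_of_hasCompactSupport hf hL hL_supp hLΩ).restrict
    (integrable_clm_apply_of_hasCompactSupport hg hL hL_supp hLΩ).restrict

theorem TendstoL1LocOn.tendsto_setIntegral_clm_apply {ι : Type*} {l : Filter ι} {f : ι → E → W}
    {g : E → W} (h : TendstoL1LocOn f g l Ω) (hf : ∀ i, LocallyIntegrableOn (f i) Ω volume)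
    (hg : LocallyIntegrableOn g Ω volume) (hL : Continuous L) (hL_supp : HasCompactSupport L)
    (hLΩ : tsupport L ⊆ Ω) :
    Tendsto (fun i => ∫ x in Ω, L x (f i x)) l (𝓝 (∫ x in Ω, L x (g x))) := by
  obtain ⟨C, hC⟩ := exists_lintegral_enorm_clm_apply_le hL hL_supp
  have bound_tendsto :
      Tendsto (fun i => C * ∫⁻ x in tsupport L, ‖f i x - g x‖ₑ) l (𝓝 0) := by
    simpa only [mul_zero] using
      ENNReal.Tendsto.const_mul (h _ hL_supp hLΩ) (.inr ENNReal.coe_ne_top)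
  refine tendsto_integral_of_L1 _
    (integrable_clm_apply_of_hasCompactSupport hg hL hL_supp hLΩ).restrict.aestronglyMeasurable
    (.of_forall fun i => (integrable_clm_apply_of_hasCompactSupport (hf i) hL hL_supp hLΩ).restrict)
    (tendsto_of_tendsto_of_tendsto_of_le_of_le tendsto_const_nhds bound_tendsto
      (fun _ => zero_le) fun i => ?_)
  simp only [← map_sub]
  exact (setLIntegral_le_lintegral _ _).trans (hC fun x => f i x - g x)

end Pairing

section TestFunctions

variable {E F : Type*} [NormedAddCommGroup E] [NormedSpace ℝ E] [NormedAddCommGroup F]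
  [NormedSpace ℝ F] {ψ : E → F} {k : ℕ}

theorem contDiff_iteratedFDeriv_apply (hψ : ContDiff ℝ (⊤ : ℕ∞) ψ) (v : Fin k → E) :
    ContDiff ℝ (⊤ : ℕ∞) fun x => iteratedFDeriv ℝ k ψ x v :=
  (ContinuousMultilinearMap.apply ℝ (fun _ : Fin k => E) F v).contDiff.comp
    (hψ.iteratedFDeriv_right (by exact_mod_cast le_top))

theorem tsupport_iteratedFDeriv_apply_subset (ψ : E → F) (v : Fin k → E) :
    tsupport (fun x => iteratedFDeriv ℝ k ψ x v) ⊆ tsupport ψ :=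
  (tsupport_comp_subset (g := fun T : ContinuousMultilinearMap ℝ (fun _ : Fin k => E) F => T v)
    rfl _).trans (tsupport_iteratedFDeriv_subset k)

theorem hasCompactSupport_iteratedFDeriv_apply (hψ : HasCompactSupport ψ) (v : Fin k → E) :
    HasCompactSupport fun x => iteratedFDeriv ℝ k ψ x v :=
  hψ.mono' ((subset_tsupport _).trans (tsupport_iteratedFDeriv_apply_subset ψ v))

end TestFunctions

section WeakDerivative

variable {E W : Type*} [NormedAddCommGroup E] [NormedSpace ℝ E] [MeasureSpace E]
  [NormedAddCommGroup W] [NormedSpace ℝ W] {Ω : Set E} {k : ℕ}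

theorem HasWeakDerivOn.of_order_zero {u : E → W}
    {v : E → ContinuousMultilinearMap ℝ (fun _ : Fin 0 => E) W}
    {w : E → ContinuousMultilinearMap ℝ (fun _ : Fin k => E) W}
    (hv : HasWeakDerivOn 0 Ω u v) (hw : HasWeakDerivOn k Ω u w) :
    HasWeakDerivOn k Ω (fun x => v x 0) w := fun ψ hψ hψ_supp hψΩ a => by
  rw [← hw ψ hψ hψ_supp hψΩ a]
  -- `∇^k ψ(a)` is itself a test function.
  simpa using (hv _ (contDiff_iteratedFDeriv_apply hψ a)
    (hasCompactSupport_iteratedFDeriv_apply hψ_supp a)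
    ((tsupport_iteratedFDeriv_apply_subset ψ a).trans hψΩ) 0).symm

theorem HasWeakDerivOn.of_tendstoL1LocOn [OpensMeasurableSpace E] {ι : Type*} {l : Filter ι}
    [l.NeBot] {u : ι → E → W} {w : ι → E → ContinuousMultilinearMap ℝ (fun _ : Fin k => E) W}
    {u' : E → W} {w' : E → ContinuousMultilinearMap ℝ (fun _ : Fin k => E) W}
    (h : ∀ i, HasWeakDerivOn k Ω (u i) (w i))
    (hu_tendsto : TendstoL1LocOn u u' l Ω) (hw_tendsto : TendstoL1LocOn w w' l Ω)
    (hu : ∀ i, LocallyIntegrableOn (u i) Ω volume) (hu' : LocallyIntegrableOn u' Ω volume)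
    (hw : ∀ i, LocallyIntegrableOn (w i) Ω volume) (hw' : LocallyIntegrableOn w' Ω volume) :
    HasWeakDerivOn k Ω u' w' := fun ψ hψ hψ_supp hψΩ v => by
  have lhs_tendsto := hu_tendsto.tendsto_setIntegral_clm_apply hu hu'
    (contDiff_iteratedFDeriv_apply hψ v).continuous
    (hasCompactSupport_iteratedFDeriv_apply hψ_supp v)
    ((tsupport_iteratedFDeriv_apply_subset ψ v).trans hψΩ)
  let eval := ContinuousMultilinearMap.apply ℝ (fun _ : Fin k => E) W v
  have rhs_tendsto := (hw_tendsto.clm_apply eval).tendsto_setIntegral_clm_apply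
    (fun i => eval.locallyIntegrableOn_comp (hw i)) (eval.locallyIntegrableOn_comp hw')
    hψ.continuous hψ_supp hψΩ
  exact tendsto_nhds_unique lhs_tendsto <|
    (rhs_tendsto.const_mul ((-1) ^ k)).congr fun i => (h i ψ hψ hψ_supp hψΩ v).symm

end WeakDerivative

section TotalVariation

variable {N : ℕ} {W : Type*} [NormedAddCommGroup W] [NormedSpace ℝ W]
  {Ω : Set (EuclideanSpace ℝ (Fin N))} {f g : EuclideanSpace ℝ (Fin N) → W} {C D : ℝ}

section Divergence

variable {Ψ : EuclideanSpace ℝ (Fin N) → W →L[ℝ] EuclideanSpace ℝ (Fin N)}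

theorem divg_neg : divg (-Ψ) = -divg Ψ := by
  ext x y
  simp [divg, fderiv_neg]

theorem continuous_divg (hΨ : ContDiff ℝ (⊤ : ℕ∞) Ψ) : Continuous (divg Ψ) :=
  continuous_finsetSum _ fun _ _ => continuous_const.clm_comp
    ((hΨ.continuous_fderiv (by simp)).clm_apply continuous_const)

theorem support_divg_subset (Ψ : EuclideanSpace ℝ (Fin N) → W →L[ℝ] EuclideanSpace ℝ (Fin N)) :
    (divg Ψ).support ⊆ tsupport Ψ := fun x hx =>
  support_fderiv_subset ℝ fun h => hx (by simp [divg, h])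

theorem hasCompactSupport_divg (hΨ : HasCompactSupport Ψ) : HasCompactSupport (divg Ψ) :=
  hΨ.mono' (support_divg_subset Ψ)

theorem tsupport_divg_subset (Ψ : EuclideanSpace ℝ (Fin N) → W →L[ℝ] EuclideanSpace ℝ (Fin N)) :
    tsupport (divg Ψ) ⊆ tsupport Ψ :=
  closure_minimal (support_divg_subset Ψ) (isClosed_tsupport Ψ)

end Divergence

theorem mem_TVSet_of_le (hC : C ∈ TVSet Ω f) (h : C ≤ D) : D ∈ TVSet Ω f :=
  ⟨hC.1.trans h, fun Ψ hΨ hΨ_supp hΨΩ => (hC.2 Ψ hΨ hΨ_supp hΨΩ).trans <|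
    mul_le_mul_of_nonneg_right h (Real.iSup_nonneg fun _ => norm_nonneg _)⟩

theorem mem_TVSet_of_tv_lt (hf : HasBV Ω f) (h : tv Ω f < C) : C ∈ TVSet Ω f := by
  obtain ⟨D, hD, hDC⟩ := exists_lt_of_csInf_lt hf h
  exact mem_TVSet_of_le hD hDC.le

theorem tv_nonneg : 0 ≤ tv Ω f := Real.sInf_nonneg fun _ hC => hC.1

theorem tv_le_of_mem_TVSet (h : C ∈ TVSet Ω f) : tv Ω f ≤ C :=
  csInf_le ⟨0, fun _ hD => hD.1⟩ h

theorem add_mem_TVSet_sub (hf : LocallyIntegrableOn f Ω volume)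
    (hg : LocallyIntegrableOn g Ω volume) (hC : C ∈ TVSet Ω f) (hD : D ∈ TVSet Ω g) :
    C + D ∈ TVSet Ω (f - g) := by
  refine ⟨add_nonneg hC.1 hD.1, fun Ψ hΨ hΨ_supp hΨΩ => ?_⟩
  have bound_f := hC.2 Ψ hΨ hΨ_supp hΨΩ
  have bound_g := hD.2 (-Ψ) hΨ.neg hΨ_supp.neg (by rwa [tsupport, Function.support_neg])
  simp only [divg_neg, Pi.neg_apply, neg_apply, integral_neg, norm_neg] at bound_g
  rw [setIntegral_clm_apply_sub hf hg (continuous_divg hΨ) (hasCompactSupport_divg hΨ_supp)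
    ((tsupport_divg_subset Ψ).trans hΨΩ)]
  linarith

theorem HasBV.sub (hf_bv : HasBV Ω f) (hg_bv : HasBV Ω g) (hf : LocallyIntegrableOn f Ω volume)
    (hg : LocallyIntegrableOn g Ω volume) : HasBV Ω (f - g) :=
  let ⟨C, hC⟩ := hf_bv
  let ⟨D, hD⟩ := hg_bv
  ⟨C + D, add_mem_TVSet_sub hf hg hC hD⟩

theorem mem_TVSet_of_tendstoL1LocOn {ι : Type*} {l : Filter ι} [l.NeBot]
    {f : ι → EuclideanSpace ℝ (Fin N) → W} (h : TendstoL1LocOn f g l Ω)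
    (hf : ∀ i, LocallyIntegrableOn (f i) Ω volume) (hg : LocallyIntegrableOn g Ω volume)
    (hC : ∀ᶠ i in l, C ∈ TVSet Ω (f i)) : C ∈ TVSet Ω g := by
  obtain ⟨i, hi⟩ := hC.exists
  refine ⟨hi.1, fun Ψ hΨ hΨ_supp hΨΩ => ?_⟩
  exact le_of_tendsto (h.tendsto_setIntegral_clm_apply hf hg (continuous_divg hΨ)
    (hasCompactSupport_divg hΨ_supp) ((tsupport_divg_subset Ψ).trans hΨΩ))
    (hC.mono fun i hi => hi.2 Ψ hΨ hΨ_supp hΨΩ)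

section CauchyTV

variable {f : ℕ → EuclideanSpace ℝ (Fin N) → W}

theorem TendstoL1LocOn.eventually_mem_TVSet_sub (h : TendstoL1LocOn f g atTop Ω)
    (hf : ∀ n, LocallyIntegrableOn (f n) Ω volume) (hg : LocallyIntegrableOn g Ω volume)
    (hf_bv : ∀ n, HasBV Ω (f n))
    (hcauchy : Tendsto (fun p : ℕ × ℕ => tv Ω (f p.1 - f p.2)) atTop (𝓝 0)) (hC : 0 < C) :
    ∀ᶠ n in atTop, C ∈ TVSet Ω (f n - g) := by
  obtain ⟨M, hM⟩ := eventually_atTop_prod_self.1 (hcauchy.eventually_lt_const hC)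
  filter_upwards [eventually_ge_atTop M] with n hn
  refine mem_TVSet_of_tendstoL1LocOn (h.const_sub (f n)) (fun k => (hf n).sub (hf k))
    ((hf n).sub hg) ?_
  filter_upwards [eventually_ge_atTop M] with k hk
  exact mem_TVSet_of_tv_lt ((hf_bv n).sub (hf_bv k) (hf n) (hf k)) (hM n k hn hk)

theorem TendstoL1LocOn.hasBV (h : TendstoL1LocOn f g atTop Ω)
    (hf : ∀ n, LocallyIntegrableOn (f n) Ω volume) (hg : LocallyIntegrableOn g Ω volume)
    (hf_bv : ∀ n, HasBV Ω (f n))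
    (hcauchy : Tendsto (fun p : ℕ × ℕ => tv Ω (f p.1 - f p.2)) atTop (𝓝 0)) : HasBV Ω g := by
  obtain ⟨n, hn⟩ := (h.eventually_mem_TVSet_sub hf hg hf_bv hcauchy one_pos).exists
  simpa only [sub_sub_cancel] using
    (hf_bv n).sub (g := f n - g) ⟨1, hn⟩ (hf n) ((hf n).sub hg)

theorem TendstoL1LocOn.tendsto_tv_sub (h : TendstoL1LocOn f g atTop Ω)
    (hf : ∀ n, LocallyIntegrableOn (f n) Ω volume) (hg : LocallyIntegrableOn g Ω volume)
    (hf_bv : ∀ n, HasBV Ω (f n))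
    (hcauchy : Tendsto (fun p : ℕ × ℕ => tv Ω (f p.1 - f p.2)) atTop (𝓝 0)) :
    Tendsto (fun n => tv Ω (f n - g)) atTop (𝓝 0) := by
  refine tendsto_order.2 ⟨fun a ha => .of_forall fun n => ha.trans_le tv_nonneg, fun a ha => ?_⟩
  filter_upwards [h.eventually_mem_TVSet_sub hf hg hf_bv hcauchy (half_pos ha)] with n hn
  exact (tv_le_of_mem_TVSet hn).trans_lt (half_lt_self ha)

end CauchyTV

end TotalVariation

section OrliczSobolevTV

variable {N : ℕ} {V : Type*} [NormedAddCommGroup V] [NormedSpace ℝ V]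
  {Ω : Set (EuclideanSpace ℝ (Fin N))}

/-- Membership of `u` in `W^{m,𝒜,TV}(Ω,V)`, witnessed by the family `w` of its weak derivatives
`w k = ∇^k u`, `k ≤ m`; the fields `w k` with `k > m` are unconstrained. -/
structure MemOrliczSobolevTV (𝒜 : MusielakOrlicz Ω) (m : ℕ) (u : EuclideanSpace ℝ (Fin N) → V)
    (w : ∀ k : ℕ, EuclideanSpace ℝ (Fin N) →
      ContinuousMultilinearMap ℝ (fun _ : Fin k => EuclideanSpace ℝ (Fin N)) V) : Prop where
  locallyIntegrableOn : LocallyIntegrableOn u Ω volume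
  hasWeakDerivOn : ∀ k ≤ m, HasWeakDerivOn k Ω u (w k)
  memOrlicz : ∀ k ≤ m, MemOrlicz 𝒜.toFun Ω (w k)
  hasBV : HasBV Ω (w m)

/-- The norm `‖u‖_{W^{m,𝒜}} + TV(∇^m u, Ω)` of `W^{m,𝒜,TV}(Ω,V)`, as a functional of the family
`w` of weak derivatives of `u`. It is meaningful only if `w m` has bounded variation: otherwise
`tv Ω (w m)` is the infimum of the empty set of reals, which is `0`. -/
def orliczSobolevTVNorm (𝒜 : MusielakOrlicz Ω) (m : ℕ)
    (w : ∀ k : ℕ, EuclideanSpace ℝ (Fin N) →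
      ContinuousMultilinearMap ℝ (fun _ : Fin k => EuclideanSpace ℝ (Fin N)) V) : ℝ≥0∞ :=
  ∑ k ∈ Finset.range (m + 1), luxNorm 𝒜.toFun Ω (w k) + ENNReal.ofReal (tv Ω (w m))

variable {𝒜 : MusielakOrlicz Ω} {m : ℕ}

theorem tendsto_orliczSobolevTVNorm_zero_iff {ι : Type*} {l : Filter ι}
    {w : ι → ∀ k : ℕ, EuclideanSpace ℝ (Fin N) →
      ContinuousMultilinearMap ℝ (fun _ : Fin k => EuclideanSpace ℝ (Fin N)) V} :
    Tendsto (fun i => orliczSobolevTVNorm 𝒜 m (w i)) l (𝓝 0) ↔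
      (∀ k ≤ m, Tendsto (fun i => luxNorm 𝒜.toFun Ω (w i k)) l (𝓝 0)) ∧
        Tendsto (fun i => tv Ω (w i m)) l (𝓝 0) := by
  refine ⟨fun h => ⟨fun k hk => ?_, ?_⟩, fun ⟨hlux, htv⟩ => ?_⟩
  · refine tendsto_of_tendsto_of_tendsto_of_le_of_le tendsto_const_nhds h (fun _ => zero_le)
      fun i => le_trans ?_ le_self_add
    exact Finset.single_le_sum_of_canonicallyOrdered (f := fun k => luxNorm 𝒜.toFun Ω (w i k))
      (Finset.mem_range.2 (Nat.lt_succ_of_le hk))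
  · have ofReal_tendsto : Tendsto (fun i => ENNReal.ofReal (tv Ω (w i m))) l (𝓝 0) :=
      tendsto_of_tendsto_of_tendsto_of_le_of_le tendsto_const_nhds h (fun _ => zero_le)
        fun _ => le_add_self
    simpa only [Function.comp_def, ENNReal.toReal_ofReal tv_nonneg, ENNReal.toReal_zero] using
      (ENNReal.tendsto_toReal ENNReal.zero_ne_top).comp ofReal_tendsto
  · have sum_tendsto := tendsto_finsetSum (Finset.range (m + 1)) fun k hk =>
      hlux k (Nat.lt_succ_iff.1 (Finset.mem_range.1 hk))
    simpa [orliczSobolevTVNorm] using sum_tendsto.add (ENNReal.tendsto_ofReal htv)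

theorem orlicz_sobolev_tv_complete_general [CompleteSpace V] (hemb : 𝒜.EmbedsInL1Loc)
    {u : ℕ → EuclideanSpace ℝ (Fin N) → V}
    {w : ℕ → ∀ k : ℕ, EuclideanSpace ℝ (Fin N) →
      ContinuousMultilinearMap ℝ (fun _ : Fin k => EuclideanSpace ℝ (Fin N)) V}
    (h : ∀ n, MemOrliczSobolevTV 𝒜 m (u n) (w n))
    (hcauchy : Tendsto (fun p : ℕ × ℕ => orliczSobolevTVNorm 𝒜 m (w p.1 - w p.2))
      atTop (𝓝 0)) :
    ∃ (g : EuclideanSpace ℝ (Fin N) → V)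
      (wg : ∀ k : ℕ, EuclideanSpace ℝ (Fin N) →
        ContinuousMultilinearMap ℝ (fun _ : Fin k => EuclideanSpace ℝ (Fin N)) V),
      MemOrliczSobolevTV 𝒜 m g wg ∧
        Tendsto (fun n => orliczSobolevTVNorm 𝒜 m (w n - wg)) atTop (𝓝 0) := by
  obtain ⟨lux_cauchy, tv_cauchy⟩ := tendsto_orliczSobolevTVNorm_zero_iff.1 hcauchy
  choose! wg wg_mem lux_tendsto using fun k (hk : k ≤ m) =>
    exists_memOrlicz_tendsto_luxNorm_sub (fun n => (h n).memOrlicz k hk) (lux_cauchy k hk)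
  have w_int n k (hk : k ≤ m) := hemb.locallyIntegrableOn ((h n).memOrlicz k hk)
  have wg_int k (hk : k ≤ m) := hemb.locallyIntegrableOn (wg_mem k hk)
  have w_tendsto k (hk : k ≤ m) : TendstoL1LocOn (fun n => w n k) (wg k) atTop Ω :=
    hemb.tendstoL1LocOn (fun n => ((h n).memOrlicz k hk).aestronglyMeasurable)
      (wg_mem k hk).aestronglyMeasurable (lux_tendsto k hk)
  let eval₀ := ContinuousMultilinearMap.apply ℝ (fun _ : Fin 0 => EuclideanSpace ℝ (Fin N)) V 0
  have g_int := eval₀.locallyIntegrableOn_comp (wg_int 0 m.zero_le)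
  refine ⟨fun x => eval₀ (wg 0 x), wg, ⟨g_int, fun k hk => ?_, wg_mem, ?_⟩, ?_⟩
  · exact .of_tendstoL1LocOn
      (fun n => ((h n).hasWeakDerivOn 0 m.zero_le).of_order_zero ((h n).hasWeakDerivOn k hk))
      ((w_tendsto 0 m.zero_le).clm_apply eval₀) (w_tendsto k hk)
      (fun n => eval₀.locallyIntegrableOn_comp (w_int n 0 m.zero_le)) g_int
      (w_int · k hk) (wg_int k hk)
  · exact (w_tendsto m le_rfl).hasBV (w_int · m le_rfl) (wg_int m le_rfl)
      (fun n => (h n).hasBV) tv_cauchy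
  · exact tendsto_orliczSobolevTVNorm_zero_iff.2 ⟨lux_tendsto, (w_tendsto m le_rfl).tendsto_tv_sub
      (w_int · m le_rfl) (wg_int m le_rfl) (fun n => (h n).hasBV) tv_cauchy⟩

end OrliczSobolevTV

end

/-- The space `W^{m,𝒜,TV}(Ω,V)` — functions in the Orlicz-Sobolev space `W^{m,𝒜}(Ω,V)`
whose `m`-th weak derivative has bounded variation, equipped with the norm
`‖u‖_{W^{m,𝒜}} + TV(∇^m u, Ω)` — is a Banach space, provided `L^𝒜` embeds into
`L¹_loc` (Proposition `proposition:sobolevBVspacecomplete`). Completeness is expressed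
by the convergence of every Cauchy sequence; a function of the space is recorded
together with its weak derivatives `w · k` of orders `k ≤ m`. -/
theorem orlicz_sobolev_tv_complete
    {N : ℕ} {V : Type} [NormedAddCommGroup V] [NormedSpace ℝ V] [CompleteSpace V]
    (Ω : Set (EuclideanSpace ℝ (Fin N))) (hΩ : IsOpen Ω)
    (𝒜 : MusielakOrlicz Ω) (m : ℕ)
    (hemb : ∀ (W : Type) [NormedAddCommGroup W] [NormedSpace ℝ W]
      (f : EuclideanSpace ℝ (Fin N) → W),
      MemOrlicz 𝒜.toFun Ω f → MeasureTheory.LocallyIntegrableOn f Ω volume)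
    (u : ℕ → EuclideanSpace ℝ (Fin N) → V)
    (w : ∀ _ : ℕ, ∀ k : ℕ, EuclideanSpace ℝ (Fin N) →
      ContinuousMultilinearMap ℝ (fun _ : Fin k => EuclideanSpace ℝ (Fin N)) V)
    (hu : ∀ n, MeasureTheory.LocallyIntegrableOn (u n) Ω volume)
    (hw : ∀ n k, k ≤ m →
      HasWeakDerivOn k Ω (u n) (w n k) ∧ MemOrlicz 𝒜.toFun Ω (w n k))
    (hbv : ∀ n, HasBV Ω (w n m))
    (hcauchy : ∀ ε : ℝ≥0∞, 0 < ε → ∃ M, ∀ j k, M ≤ j → M ≤ k →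
      (∑ i ∈ Finset.range (m + 1), luxNorm 𝒜.toFun Ω (w j i - w k i)) +
        ENNReal.ofReal (tv Ω (w j m - w k m)) < ε) :
    ∃ (g : EuclideanSpace ℝ (Fin N) → V)
      (wg : ∀ k : ℕ, EuclideanSpace ℝ (Fin N) →
        ContinuousMultilinearMap ℝ (fun _ : Fin k => EuclideanSpace ℝ (Fin N)) V),
      MeasureTheory.LocallyIntegrableOn g Ω volume ∧
      (∀ k, k ≤ m → HasWeakDerivOn k Ω g (wg k) ∧ MemOrlicz 𝒜.toFun Ω (wg k)) ∧
      HasBV Ω (wg m) ∧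
      ∀ ε : ℝ≥0∞, 0 < ε → ∃ M, ∀ j, M ≤ j →
        (∑ i ∈ Finset.range (m + 1), luxNorm 𝒜.toFun Ω (w j i - wg i)) +
          ENNReal.ofReal (tv Ω (w j m - wg m)) < ε := by
  obtain ⟨g, wg, hg, htendsto⟩ := orlicz_sobolev_tv_complete_general (𝒜 := 𝒜) (m := m)
    (u := u) (w := w) (fun f hf => hemb ℝ f hf)
    (fun n => ⟨hu n, fun k hk => (hw n k hk).1, fun k hk => (hw n k hk).2, hbv n⟩)
    (tendsto_order.2 ⟨by simp, fun ε hε => Filter.eventually_atTop_prod_self.2 (hcauchy ε hε)⟩)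
  exact ⟨g, wg, hg.locallyIntegrableOn, fun k hk => ⟨hg.hasWeakDerivOn k hk, hg.memOrlicz k hk⟩,
    hg.hasBV, fun ε hε => Filter.eventually_atTop.1 (htendsto.eventually_lt_const hε)⟩
end
end
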